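/- Let 0<c₁<⋯<c_m be non-integer reals. There exist constants C>0 and κ>0 depending only on c₁,…,c_m, m such that the following holds for every integer N≥1 and every l∈ℕ: if f∈ℓ²(ℤ^m) and the Fourier transform f̂ : 𝕋^m → ℂ vanishes on the box ∏_{i=1}^{m} [−2^l N^{−c_i}, 2^l N^{−c_i}] (viewed as a subset of 𝕋^m = (ℝ/ℤ)^m via representatives in [−1/2,1/2)), then ‖Ã_N f‖_{ℓ²(ℤ^m)} ≤ C (N^{−κ} + 2^{−κ l}) ‖f‖_{ℓ²(ℤ^m)}, where Ã_N f(x) = (1/N) ∑_{n=1}^{N} 1_{n>N/2} f(x−(⌊n^{c₁}⌋,…,⌊n^{c_m}⌋)). -/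

import Mathlib

/-!
Taking Fourier transforms turns `Ã_N` into multiplication by
`m_N(ξ) = N⁻¹ ∑_{N/2 < n ≤ N} e(-∑ ξ_i ⌊n ^ c_i⌋)`. The vanishing hypothesis at `ξ = 0` is an
unconditionally convergent series, so `f` is absolutely summable and its transform is a continuous
function. By Plancherel (`plancherel_compare`) it is enough to bound `m_N(ξ)` by
`C (N^{-κ} + 2^{-κ l})` for `ξ ∈ [-1/2, 1/2]^m` outside the box (`multiplier_bound`).

Without integer parts, the sums `∑ e(∑ λ_i n ^ c_i)` save a power of `min(N, Λ)`, where
`Λ = ∑ |λ_i| N ^ c_i` and `|λ_i| ≤ N` (`exp_sum_bound`). Indeed, as the `c_i` are distinct and not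
integers, a Vandermonde determinant shows that at every point one of any `m` consecutive derivatives
of the phase has the expected size `Λ / N ^ k` (`phase_bounds`). On blocks whose length is a small
multiple of `N` this persists, and the `k`-th derivative test (`derivative_test`) applies: it is
obtained from a Kusmin–Landau inequality by repeated van der Corput differencing. The orders `k` are
taken so large that these derivatives are `O(1 / N)`.

To remove the integer parts one writes `e(-ξ ⌊x⌋) = e(-ξ x) e(ξ {x})` and approximates `e(ξ {x})` by
a trigonometric polynomial of degree below `K = Q³`, the convolution with a Fejér kernel discretised
to the points `r / K` (`fejerSample`). The error is `O(1 / Q)` plus a multiple of `F_Q(x) / Q`, and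
the averages of the Fejér kernel `F_Q` are again exponential sums. Every frequency `j - ξ` that
appears, with `j` an integer vector, has `Λ ≥ min(2^l, N^{c_1} / 2)`: for `j = 0` since `ξ` is
outside the box, for `j_i ≠ 0` since `|j_i - ξ_i| ≥ 1/2`. Choosing `Q` as a small power of
`min(N, 2^l)` concludes.
-/

open MeasureTheory Filter Finset
open scoped ENNReal NNReal

noncomputable section

/-- `e(x) = e^{2πix}`. -/
def eC (x : ℝ) : ℂ := Complex.exp (2 * Real.pi * Complex.I * x)

/-- The upper-half discrete averages
`Ã_N f (x) = (1/N) ∑_{n=1}^{N} 1_{n > N/2} f(x − (⌊n^{c₁}⌋, …, ⌊n^{c_m}⌋))`. -/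
def Atil (m : ℕ) (c : Fin m → ℝ) (N : ℕ) (f : (Fin m → ℤ) → ℂ)
    (x : Fin m → ℤ) : ℂ :=
  (N : ℂ)⁻¹ * ∑ n ∈ Finset.Icc 1 N,
    if N < 2 * n then f (x - fun i => ⌊(n : ℝ) ^ c i⌋) else 0

/-- The `ℓ^p(ℤ^m)` norm of a complex-valued function. -/
def lpZ (m : ℕ) (p : ℝ) (f : (Fin m → ℤ) → ℂ) : ℝ≥0∞ :=
  (∑' x : Fin m → ℤ, (‖f x‖₊ : ℝ≥0∞) ^ p) ^ p⁻¹

/-- The `ℓ^p(ℤ^m)` norm of an `ℝ≥0∞`-valued function. -/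
def lpZE (m : ℕ) (p : ℝ) (g : (Fin m → ℤ) → ℝ≥0∞) : ℝ≥0∞ :=
  (∑' x : Fin m → ℤ, g x ^ p) ^ p⁻¹

/-! ### The character `e` -/

lemma eC_eq (x : ℝ) : eC x = Complex.exp (((2 * Real.pi * x : ℝ) : ℂ) * Complex.I) := by
  unfold eC; congr 1; push_cast; ring

lemma eC_add (x y : ℝ) : eC (x + y) = eC x * eC y := by
  unfold eC; rw [← Complex.exp_add]; congr 1; push_cast; ring

lemma eC_zero : eC 0 = 1 := by simp [eC]

lemma norm_eC (x : ℝ) : ‖eC x‖ = 1 := by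
  rw [eC_eq]; exact Complex.norm_exp_ofReal_mul_I _

lemma eC_ne_zero (x : ℝ) : eC x ≠ 0 := by
  rw [← norm_pos_iff, norm_eC]; norm_num

lemma eC_neg (x : ℝ) : eC (-x) = (eC x)⁻¹ := by
  apply eq_inv_of_mul_eq_one_left
  rw [← eC_add]; simp [eC_zero]

lemma conj_eC (x : ℝ) : (starRingEnd ℂ) (eC x) = eC (-x) := by
  rw [eC_neg, Complex.inv_def, Complex.normSq_eq_norm_sq, norm_eC]; simp

lemma eC_sub (x y : ℝ) : eC (x - y) = eC x * (eC y)⁻¹ := by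
  rw [sub_eq_add_neg, eC_add, eC_neg]

lemma eC_int (k : ℤ) : eC k = 1 := by
  unfold eC
  rw [Complex.exp_eq_one_iff]
  exact ⟨k, by push_cast; ring⟩

lemma eC_nat_mul (n : ℕ) (x : ℝ) : eC (n * x) = eC x ^ n := by
  unfold eC; rw [← Complex.exp_nat_mul]; congr 1; push_cast; ring

lemma eC_sum {ι : Type*} (s : Finset ι) (g : ι → ℝ) :
    eC (∑ i ∈ s, g i) = ∏ i ∈ s, eC (g i) := by
  classical
  induction s using Finset.induction_on with
  | empty => simp [eC_zero]
  | insert a s ha ih => rw [sum_insert ha, prod_insert ha, eC_add, ih]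

lemma norm_eC_sub_one (x : ℝ) : ‖eC x - 1‖ = 2 * |Real.sin (Real.pi * x)| := by
  have h := Complex.norm_exp_I_mul_ofReal_sub_one (2 * Real.pi * x)
  rw [eC_eq, mul_comm _ Complex.I, h, Real.norm_eq_abs, abs_mul, abs_two]
  congr 3; ring

lemma norm_eC_sub_one_le (x : ℝ) : ‖eC x - 1‖ ≤ 2 * Real.pi * |x| := by
  rw [norm_eC_sub_one]
  have := Real.abs_sin_le_abs (x := Real.pi * x)
  rw [abs_mul, abs_of_pos Real.pi_pos] at this
  linarith

lemma norm_eC_sub_eC (x y : ℝ) : ‖eC x - eC y‖ = ‖eC (x - y) - 1‖ := by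
  have : eC x - eC y = (eC (x - y) - 1) * eC y := by
    rw [sub_mul, ← eC_add]; simp
  rw [this, norm_mul, norm_eC, mul_one]

lemma norm_eC_sub_eC_le (x y : ℝ) : ‖eC x - eC y‖ ≤ 2 * Real.pi * |x - y| := by
  rw [norm_eC_sub_eC]; exact norm_eC_sub_one_le _

lemma four_mul_le_norm_eC_sub_one {x : ℝ} (hx : |x| ≤ 1 / 2) : 4 * |x| ≤ ‖eC x - 1‖ := by
  rw [norm_eC_sub_one]
  have hpi := Real.pi_pos
  have h := Real.mul_abs_le_abs_sin (x := Real.pi * x)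
    (by rw [abs_mul, abs_of_pos hpi]; nlinarith)
  rw [abs_mul, abs_of_pos hpi, ← mul_assoc, div_mul_cancel₀ _ hpi.ne'] at h
  linarith

/-! ### Van der Corput and Kusmin–Landau inequalities -/

/-- Shifting a sum that already contains the support of `F`. -/
lemma sum_shift_eq {E : Type*} [AddCommMonoid E] (F : ℕ → E) (L H h : ℕ) (hh : h ≤ H)
    (hF : ∀ n, L ≤ n → F n = 0) :
    ∑ n ∈ range (L + H), (if h ≤ n then F (n - h) else 0) = ∑ n ∈ range L, F n := by
  have h1 : L + H = h + (L + (H - h)) := by omega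
  rw [h1, sum_range_add]
  have h2 : ∑ n ∈ range h, (if h ≤ n then F (n - h) else 0) = 0 :=
    sum_eq_zero fun n hn => by
      rw [if_neg (by have := mem_range.1 hn; omega)]
  rw [h2, zero_add, sum_range_add]
  simp only [le_add_iff_nonneg_right, zero_le, if_true, Nat.add_sub_cancel_left]
  rw [sum_eq_zero (s := range (H - h)) (fun n _ => hF _ (by omega)), add_zero]

lemma sum_dist_le (r : ℕ → ℝ) (hr : ∀ d, 0 ≤ r d) (H h : ℕ) (hh : h < H) :
    ∑ h' ∈ range H, r (Nat.dist h h') ≤ r 0 + 2 * ∑ d ∈ Ico 1 H, r d := by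
  have hsplit : ∑ h' ∈ range H, r (Nat.dist h h') =
      ∑ h' ∈ range (h + 1), r (Nat.dist h h') + ∑ h' ∈ Ico (h + 1) H, r (Nat.dist h h') :=
    (sum_range_add_sum_Ico _ (by omega)).symm
  have h1 : ∑ h' ∈ range (h + 1), r (Nat.dist h h') ≤ ∑ d ∈ range H, r d := by
    rw [← sum_range_reflect]
    calc _ = ∑ j ∈ range (h + 1), r j := by
            refine sum_congr rfl fun j hj => ?_
            have := mem_range.1 hj
            congr 1; unfold Nat.dist; omega
      _ ≤ _ := sum_le_sum_of_subset_of_nonneg (by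
            intro a ha; simp only [mem_range] at *; omega) (fun i _ _ => hr i)
  have h2 : ∑ h' ∈ Ico (h + 1) H, r (Nat.dist h h') ≤ ∑ d ∈ Ico 1 H, r d := by
    rw [sum_Ico_eq_sum_range]
    calc _ = ∑ j ∈ range (H - (h + 1)), r (1 + j) := by
            refine sum_congr rfl fun j hj => ?_
            congr 1; unfold Nat.dist; omega
      _ ≤ ∑ j ∈ range (H - 1), r (1 + j) :=
          sum_le_sum_of_subset_of_nonneg (by
            intro a ha; simp only [mem_range] at *; omega) (fun i _ _ => hr _)
      _ = _ := by rw [sum_Ico_eq_sum_range]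
  have h3 : ∑ d ∈ range H, r d = r 0 + ∑ d ∈ Ico 1 H, r d := by
    rw [range_eq_Ico, sum_eq_sum_Ico_succ_bot (by omega)]
  linarith

/-- Van der Corput's inequality for a sequence supported on `[0, L)`. -/
lemma van_der_corput (z : ℕ → ℂ) (L H : ℕ) (hz : ∀ n, L ≤ n → z n = 0) :
    (H : ℝ) * ‖∑ n ∈ range L, z n‖ ^ 2 ≤ ((L : ℝ) + H) *
      (‖∑ n ∈ range L, z n * starRingEnd ℂ (z n)‖ +
        2 * ∑ d ∈ Ico 1 H, ‖∑ n ∈ range L, z (n + d) * starRingEnd ℂ (z n)‖) := by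
  rcases Nat.eq_zero_or_pos H with rfl | hH
  · simp; positivity
  -- the translates of `z`; averaging them over `h < H` and applying Cauchy–Schwarz gives the claim
  set v : ℕ → ℕ → ℂ := fun h n => if h ≤ n then z (n - h) else 0 with hv
  set r : ℕ → ℝ := fun d => ‖∑ n ∈ range L, z (n + d) * starRingEnd ℂ (z n)‖ with hr
  have hS : ∀ h ∈ range H, ∑ n ∈ range (L + H), v h n = ∑ n ∈ range L, z n := fun h hh =>
    sum_shift_eq z L H h (mem_range.1 hh).le hz
  have hcorr : ∀ h h', h ≤ h' → h' ≤ H →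
      ∑ n ∈ range (L + H), v h n * starRingEnd ℂ (v h' n) =
        ∑ n ∈ range L, z (n + (h' - h)) * starRingEnd ℂ (z n) := by
    intro h h' h1 h2
    rw [← sum_shift_eq (fun n => z (n + (h' - h)) * starRingEnd ℂ (z n)) L H h' h2
      (fun n hn => by simp [hz n hn])]
    refine sum_congr rfl fun n _ => ?_
    by_cases hn : h' ≤ n
    · simp only [hv, if_pos hn, if_pos (h1.trans hn)]
      congr 2; omega
    · simp [hv, if_neg hn]
  have hnorm : ∀ h < H, ∀ h' < H,
      ‖∑ n ∈ range (L + H), v h n * starRingEnd ℂ (v h' n)‖ = r (Nat.dist h h') := by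
    intro h hh h' hh'
    rcases le_total h h' with hle | hle
    · rw [hcorr h h' hle hh'.le, Nat.dist_eq_sub_of_le hle]
    · rw [Nat.dist_eq_sub_of_le_right hle]
      have := hcorr h' h hle hh.le
      simp only [hr]
      rw [← this, ← Complex.norm_conj, map_sum]
      congr 1
      refine sum_congr rfl fun n _ => ?_
      simp [mul_comm]
  have hsq : ∑ n ∈ range (L + H), ‖∑ h ∈ range H, v h n‖ ^ 2 ≤
      H * (r 0 + 2 * ∑ d ∈ Ico 1 H, r d) := by
    have e1 : ((∑ n ∈ range (L + H), ‖∑ h ∈ range H, v h n‖ ^ 2 : ℝ) : ℂ) =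
        ∑ h ∈ range H, ∑ h' ∈ range H,
          ∑ n ∈ range (L + H), v h n * starRingEnd ℂ (v h' n) := by
      push_cast
      simp_rw [← Complex.mul_conj', map_sum, sum_mul_sum]
      rw [sum_comm]
      refine sum_congr rfl fun h _ => ?_
      rw [sum_comm]
    have e2 : (∑ n ∈ range (L + H), ‖∑ h ∈ range H, v h n‖ ^ 2 : ℝ) =
        ‖((∑ n ∈ range (L + H), ‖∑ h ∈ range H, v h n‖ ^ 2 : ℝ) : ℂ)‖ := by
      rw [Complex.norm_real, Real.norm_of_nonneg (sum_nonneg fun _ _ => by positivity)]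
    rw [e2, e1]
    calc _ ≤ ∑ h ∈ range H, ∑ h' ∈ range H, r (Nat.dist h h') := by
          refine (norm_sum_le _ _).trans (sum_le_sum fun h hh => ?_)
          refine (norm_sum_le _ _).trans (sum_le_sum fun h' hh' => ?_)
          exact (hnorm h (mem_range.1 hh) h' (mem_range.1 hh')).le
      _ ≤ ∑ h ∈ range H, (r 0 + 2 * ∑ d ∈ Ico 1 H, r d) :=
          sum_le_sum fun h hh => sum_dist_le r (fun d => norm_nonneg _) H h (mem_range.1 hh)
      _ = _ := by rw [sum_const, card_range, nsmul_eq_mul]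
  have hCS : ‖∑ n ∈ range (L + H), ∑ h ∈ range H, v h n‖ ^ 2 ≤
      ((L : ℝ) + H) * ∑ n ∈ range (L + H), ‖∑ h ∈ range H, v h n‖ ^ 2 := by
    calc _ ≤ (∑ n ∈ range (L + H), ‖∑ h ∈ range H, v h n‖) ^ 2 := by
          gcongr; exact norm_sum_le _ _
      _ ≤ _ := by
          have := sq_sum_le_card_mul_sum_sq (s := range (L + H))
            (f := fun n => ‖∑ h ∈ range H, v h n‖)
          simpa using this
  have htot : ∑ n ∈ range (L + H), ∑ h ∈ range H, v h n = H * ∑ n ∈ range L, z n := by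
    rw [sum_comm, sum_congr rfl hS]; simp
  rw [htot, norm_mul, Complex.norm_natCast, mul_pow] at hCS
  have hH' : (0 : ℝ) < H := by exact_mod_cast hH
  have h0 : r 0 = ‖∑ n ∈ range L, z n * starRingEnd ℂ (z n)‖ := by simp [hr]
  rw [← h0]
  refine le_of_mul_le_mul_left ?_ hH'
  calc (H : ℝ) * (H * ‖∑ n ∈ range L, z n‖ ^ 2) = H ^ 2 * ‖∑ n ∈ range L, z n‖ ^ 2 := by ring
    _ ≤ _ := hCS
    _ ≤ ((L : ℝ) + H) * (H * (r 0 + 2 * ∑ d ∈ Ico 1 H, r d)) := by gcongr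
    _ = _ := by ring

/-- Van der Corput's inequality for exponential sums: with `H ≤ L` shifts,
the sum is controlled by the sums of the differenced phases `a (n + d) - a n`. -/
lemma van_der_corput_exp (a : ℕ → ℝ) (L' L H : ℕ) (hL : L' ≤ L) (hH : H ≤ L) :
    (H : ℝ) * ‖∑ n ∈ range L', eC (a n)‖ ^ 2 ≤ 2 * L *
      (L + 2 * ∑ d ∈ Ico 1 H, ‖∑ n ∈ range (L' - d), eC (a (n + d) - a n)‖) := by
  set z : ℕ → ℂ := fun n => if n < L' then eC (a n) else 0 with hz
  have h := van_der_corput z L' H (fun n hn => by simp [hz, not_lt.2 hn])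
  have e1 : ∑ n ∈ range L', z n = ∑ n ∈ range L', eC (a n) :=
    sum_congr rfl fun n hn => by simp [hz, mem_range.1 hn]
  have e2 : ‖∑ n ∈ range L', z n * starRingEnd ℂ (z n)‖ = L' := by
    rw [sum_congr rfl (g := fun _ => (1 : ℂ))]
    · simp
    · intro n hn
      simp [hz, mem_range.1 hn, Complex.mul_conj', norm_eC]
  have e3 : ∀ d, ∑ n ∈ range L', z (n + d) * starRingEnd ℂ (z n) =
      ∑ n ∈ range (L' - d), eC (a (n + d) - a n) := by
    intro d
    symm
    refine sum_subset_zero_on_sdiff (fun n hn => ?_) (fun n hn => ?_) (fun n hn => ?_)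
    · have := mem_range.1 hn
      exact mem_range.2 (by omega)
    · obtain ⟨hn1, hn2⟩ := mem_sdiff.1 hn
      rw [mem_range] at hn1 hn2
      simp only [hz]
      rw [if_neg (by omega)]; simp
    · have := mem_range.1 hn
      simp only [hz]
      rw [if_pos (by omega), if_pos (by omega), conj_eC, ← eC_add, sub_eq_add_neg]
  rw [e1, e2] at h
  simp_rw [e3] at h
  refine h.trans ?_
  have hL1 : (L' : ℝ) ≤ L := by exact_mod_cast hL
  have hH1 : (H : ℝ) ≤ L := by exact_mod_cast hH
  have : (0 : ℝ) ≤ ∑ d ∈ Ico 1 H, ‖∑ n ∈ range (L' - d), eC (a (n + d) - a n)‖ :=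
    sum_nonneg fun _ _ => norm_nonneg _
  gcongr
  linarith

lemma sum_by_parts (b w : ℕ → ℂ) (M : ℕ) :
    ∑ n ∈ range (M + 1), (b (n + 1) - b n) * w n =
      b (M + 1) * w M - b 0 * w 0 - ∑ n ∈ range M, b (n + 1) * (w (n + 1) - w n) := by
  induction M with
  | zero => simp; ring
  | succ M ih => rw [sum_range_succ, ih, sum_range_succ _ M]; ring

/-- A Kusmin–Landau type estimate: the monotonicity of the increments `a (n + 1) - a n`
is replaced by a bound on their variation. -/
lemma kusmin_landau (a : ℕ → ℝ) (M : ℕ) (ρ σ : ℝ) (hρ : 0 < ρ)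
    (hd : ∀ n ≤ M, ρ ≤ |a (n + 1) - a n| ∧ |a (n + 1) - a n| ≤ 1 / 2)
    (hdd : ∀ n < M, |(a (n + 2) - a (n + 1)) - (a (n + 1) - a n)| ≤ σ) :
    ‖∑ n ∈ range (M + 2), eC (a n)‖ ≤ 1 + 1 / ρ + M * (σ / ρ ^ 2) := by
  set w : ℕ → ℂ := fun n => (eC (a (n + 1) - a n) - 1)⁻¹ with hw
  have hge : ∀ n ≤ M, 4 * ρ ≤ ‖eC (a (n + 1) - a n) - 1‖ := fun n hn => by
    have := four_mul_le_norm_eC_sub_one (hd n hn).2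
    linarith [(hd n hn).1]
  have hne : ∀ n ≤ M, eC (a (n + 1) - a n) - 1 ≠ 0 := fun n hn => by
    rw [← norm_pos_iff]; linarith [hge n hn]
  have hwn : ∀ n ≤ M, ‖w n‖ ≤ 1 / (4 * ρ) := fun n hn => by
    simp only [hw, norm_inv]
    rw [← one_div]
    exact one_div_le_one_div_of_le (by linarith) (hge n hn)
  have hwd : ∀ n < M, ‖w (n + 1) - w n‖ ≤ σ / ρ ^ 2 := by
    intro n hn
    have h1 := hge n hn.le
    have h2 := hge (n + 1) hn
    have e : w (n + 1) - w n = (eC (a (n + 1) - a n) - eC (a (n + 2) - a (n + 1))) /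
        ((eC (a (n + 1 + 1) - a (n + 1)) - 1) * (eC (a (n + 1) - a n) - 1)) := by
      simp only [hw]
      rw [inv_sub_inv (hne _ hn) (hne _ hn.le)]
      congr 1; ring
    rw [e, norm_div, norm_mul]
    have h3 : ‖eC (a (n + 1) - a n) - eC (a (n + 2) - a (n + 1))‖ ≤ 8 * σ := by
      refine (norm_eC_sub_eC_le _ _).trans ?_
      rw [abs_sub_comm]
      have hp := Real.pi_lt_four
      have := hdd n hn
      have := abs_nonneg ((a (n + 2) - a (n + 1)) - (a (n + 1) - a n))
      nlinarith [Real.pi_pos]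
    have hσ : 0 ≤ σ := (abs_nonneg _).trans (hdd n hn)
    calc _ ≤ 8 * σ / (4 * ρ * (4 * ρ)) := by gcongr
      _ ≤ _ := by
        rw [div_le_div_iff₀ (by positivity) (by positivity)]
        nlinarith [mul_nonneg hσ (sq_nonneg ρ)]
  have hterm : ∀ n ∈ range (M + 1), eC (a n) = (eC (a (n + 1)) - eC (a n)) * w n := by
    intro n hn
    have hn' : n ≤ M := by have := mem_range.1 hn; omega
    have : eC (a (n + 1)) = eC (a (n + 1) - a n) * eC (a n) := by rw [← eC_add]; simp
    rw [this]
    simp only [hw]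
    field_simp [hne n hn']
  rw [sum_range_succ, sum_congr rfl hterm, sum_by_parts (fun n => eC (a n))]
  have hlast : ‖∑ n ∈ range M, eC (a (n + 1)) * (w (n + 1) - w n)‖ ≤ M * (σ / ρ ^ 2) := by
    refine (norm_sum_le _ _).trans ?_
    refine (sum_le_sum (g := fun _ => σ / ρ ^ 2) fun n hn => ?_).trans (by simp)
    rw [norm_mul, norm_eC, one_mul]
    exact hwd n (mem_range.1 hn)
  have hA : ‖eC (a (M + 1)) * w M‖ ≤ 1 / (4 * ρ) := by
    rw [norm_mul, norm_eC, one_mul]; exact hwn M le_rfl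
  have hB : ‖eC (a 0) * w 0‖ ≤ 1 / (4 * ρ) := by
    rw [norm_mul, norm_eC, one_mul]; exact hwn 0 (Nat.zero_le _)
  have hC : 1 / (4 * ρ) + 1 / (4 * ρ) ≤ 1 / ρ := by
    have : 1 / (4 * ρ) + 1 / (4 * ρ) = (1 / ρ) / 2 := by field_simp; norm_num
    rw [this]; linarith [one_div_pos.2 hρ]
  calc _ ≤ ‖eC (a (M + 1)) * w M‖ + ‖eC (a 0) * w 0‖ +
        ‖∑ n ∈ range M, eC (a (n + 1)) * (w (n + 1) - w n)‖ + ‖eC (a (M + 1))‖ :=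
        (norm_add_le _ _).trans (by
          gcongr; exact (norm_sub_le _ _).trans (by gcongr; exact norm_sub_le _ _))
    _ ≤ _ := by rw [norm_eC]; linarith

/-! ### The first derivative test -/

lemma mvt_forward (g g' : ℝ → ℝ) (x h : ℝ) (hh : 0 < h)
    (hd : ∀ y ∈ Set.Icc x (x + h), HasDerivAt g (g' y) y) :
    ∃ ζ ∈ Set.Icc x (x + h), g (x + h) - g x = h * g' ζ := by
  obtain ⟨ζ, hζ, he⟩ := exists_hasDerivAt_eq_slope g g' (show x < x + h by linarith)
    (fun y hy => (hd y hy).continuousAt.continuousWithinAt)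
    (fun y hy => hd y (Set.Ioo_subset_Icc_self hy))
  refine ⟨ζ, Set.Ioo_subset_Icc_self hζ, ?_⟩
  rw [he, add_sub_cancel_left]
  field_simp

lemma norm_sum_eC_le (a : ℕ → ℝ) (s : Finset ℕ) : ‖∑ n ∈ s, eC (a n)‖ ≤ s.card := by
  refine (norm_sum_le _ _).trans ?_
  simp [norm_eC]

lemma sum_rpow_neg_le (κ : ℝ) (h0 : 0 < κ) (h1 : κ ≤ 1 / 2) (H : ℕ) (hH : 1 ≤ H) :
    ∑ d ∈ Ico 1 (H + 1), (d : ℝ) ^ (-κ) ≤ 2 * ((H : ℝ) * (H : ℝ) ^ (-κ)) := by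
  induction H, hH using Nat.le_induction with
  | base => simp
  | succ n hn ih =>
    rw [sum_Ico_succ_top (by omega)]
    set x : ℝ := (n : ℝ) with hx
    have hx0 : 0 < x := by rw [hx]; exact_mod_cast hn
    have e : ((n + 1 : ℕ) : ℝ) = x + 1 := by rw [hx]; push_cast; ring
    rw [e]
    -- Bernoulli's inequality gives `((x + 1) / x) ^ κ ≤ 1 + 1 / (2 x)`.
    have hb : (1 + 1 / x) ^ κ ≤ 1 + κ * (1 / x) :=
      rpow_one_add_le_one_add_mul_self (by have := one_div_pos.2 hx0; linarith) h0.le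
        (by linarith)
    have e2 : 1 + 1 / x = (x + 1) / x := by field_simp
    rw [e2, Real.div_rpow (by positivity) hx0.le] at hb
    have hp : 0 < x ^ κ := Real.rpow_pos_of_pos hx0 _
    have hp1 : 0 < (x + 1) ^ κ := Real.rpow_pos_of_pos (by linarith) _
    rw [Real.rpow_neg hx0.le] at ih
    rw [Real.rpow_neg (by positivity)]
    have h3 : (x + 1) ^ κ ≤ (1 + 1 / (2 * x)) * x ^ κ := by
      rw [div_le_iff₀ hp] at hb
      refine hb.trans ?_
      gcongr
      have : 1 / (2 * x) = 1 / 2 * (1 / x) := by field_simp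
      rw [this]
      gcongr
    have h4 : x * (x ^ κ)⁻¹ ≤ (x + 1 / 2) * ((x + 1) ^ κ)⁻¹ := by
      rw [← div_eq_mul_inv, ← div_eq_mul_inv, div_le_div_iff₀ hp hp1]
      calc x * (x + 1) ^ κ ≤ x * ((1 + 1 / (2 * x)) * x ^ κ) := by gcongr
        _ = _ := by field_simp
    linarith

/-- The first-derivative case of the derivative test. -/
lemma derivative_test_one (A : ℝ) (hA : 1 ≤ A) (L L' : ℕ) (ρ : ℝ) (ψ : ℕ → ℝ → ℝ)
    (hL : 1 ≤ L) (hL' : L' ≤ L) (hρ : 0 < ρ)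
    (hd : ∀ j, ∀ x ∈ Set.Icc (0 : ℝ) L', HasDerivAt (ψ j) (ψ (j + 1) x) x)
    (h1 : ∀ x ∈ Set.Icc (0 : ℝ) L', ρ ≤ |ψ 1 x| ∧ |ψ 1 x| ≤ A * ρ)
    (h2 : ∀ x ∈ Set.Icc (0 : ℝ) L', |ψ 2 x| ≤ A * ρ / L) :
    ‖∑ n ∈ range L', eC (ψ 0 n)‖ ≤
      3 * A * L * ((ρ * L) ^ (-(1 / 2) : ℝ) + ρ ^ (1 / 2 : ℝ) + (L : ℝ) ^ (-(1 / 2) : ℝ)) := by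
  have hLr : (1 : ℝ) ≤ L := by exact_mod_cast hL
  have hL0 : (0 : ℝ) < L := by linarith
  have htriv : ‖∑ n ∈ range L', eC (ψ 0 n)‖ ≤ L :=
    (norm_sum_eC_le _ _).trans (by rw [card_range]; exact_mod_cast hL')
  have hU : 0 ≤ (ρ * L) ^ (-(1 / 2) : ℝ) := by positivity
  have hV : 0 ≤ ρ ^ (1 / 2 : ℝ) := by positivity
  have hW : 0 ≤ (L : ℝ) ^ (-(1 / 2) : ℝ) := by positivity
  -- it suffices to bound the sum by a single one of the three terms
  have key : ∀ t : ℝ, t ≤ (ρ * L) ^ (-(1 / 2) : ℝ) + ρ ^ (1 / 2 : ℝ) + (L : ℝ) ^ (-(1 / 2) : ℝ) →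
      ‖∑ n ∈ range L', eC (ψ 0 n)‖ ≤ 3 * A * L * t → ‖∑ n ∈ range L', eC (ψ 0 n)‖ ≤
      3 * A * L * ((ρ * L) ^ (-(1 / 2) : ℝ) + ρ ^ (1 / 2 : ℝ) + (L : ℝ) ^ (-(1 / 2) : ℝ)) :=
    fun t ht h => h.trans (by gcongr)
  by_cases hM : ρ * L ≤ 1
  · have : 1 ≤ (ρ * L) ^ (-(1 / 2) : ℝ) :=
      Real.one_le_rpow_of_pos_of_le_one_of_nonpos (by positivity) hM (by norm_num)
    refine key 1 (by linarith) (htriv.trans ?_)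
    nlinarith
  push Not at hM
  by_cases hAρ : 1 / 2 < A * ρ
  · refine key (ρ ^ (1 / 2 : ℝ)) (by linarith) (htriv.trans ?_)
    have h3 : 1 / (2 * A) ≤ ρ := by rw [div_le_iff₀ (by linarith)]; linarith
    have h4 : 1 / (2 * A) ≤ ρ ^ (1 / 2 : ℝ) := by
      calc 1 / (2 * A) = (1 / (2 * A)) ^ (1 : ℝ) := by simp
        _ ≤ (1 / (2 * A)) ^ (1 / 2 : ℝ) :=
          Real.rpow_le_rpow_of_exponent_ge (by positivity)
            (by rw [div_le_one (by linarith)]; linarith) (by norm_num)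
        _ ≤ _ := by gcongr
    have h5 : 1 ≤ 2 * A * ρ ^ (1 / 2 : ℝ) := by
      rw [div_le_iff₀ (by linarith)] at h4; linarith
    have h6 : 1 ≤ 3 * A * ρ ^ (1 / 2 : ℝ) := by nlinarith
    calc (L : ℝ) = L * 1 := by ring
      _ ≤ L * (3 * A * ρ ^ (1 / 2 : ℝ)) := by gcongr
      _ = _ := by ring
  push Not at hAρ
  have hρ2 : ρ ≤ 1 / 2 := by nlinarith
  refine key ((ρ * L) ^ (-(1 / 2) : ℝ)) (by linarith) ?_
  have hfin : 3 * A / ρ ≤ 3 * A * L * (ρ * L) ^ (-(1 / 2) : ℝ) := by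
    have h3 : (ρ * L) ^ (-1 : ℝ) ≤ (ρ * L) ^ (-(1 / 2) : ℝ) :=
      Real.rpow_le_rpow_of_exponent_le hM.le (by norm_num)
    rw [Real.rpow_neg_one] at h3
    calc 3 * A / ρ = 3 * A * L * (ρ * L)⁻¹ := by field_simp
      _ ≤ _ := by gcongr
  refine le_trans ?_ hfin
  have h1ρ : 2 ≤ 1 / ρ := by rw [le_div_iff₀ hρ]; linarith
  have h3A : 3 * A / ρ = 3 * A * (1 / ρ) := by ring
  rcases Nat.lt_or_ge L' 2 with hlt | hge
  · have : ‖∑ n ∈ range L', eC (ψ 0 n)‖ ≤ 1 := (norm_sum_eC_le _ _).trans (by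
      rw [card_range]; exact_mod_cast (by omega : L' ≤ 1))
    rw [h3A]; nlinarith
  obtain ⟨M, rfl⟩ : ∃ M, L' = M + 2 := ⟨L' - 2, by omega⟩
  have hML : (M : ℝ) ≤ L := by
    have : M ≤ L := by omega
    exact_mod_cast this
  have hkl := kusmin_landau (fun n => ψ 0 n) M ρ (A * ρ / L) hρ ?_ ?_
  · refine hkl.trans ?_
    have e : (M : ℝ) * (A * ρ / L / ρ ^ 2) ≤ A / ρ := by
      calc (M : ℝ) * (A * ρ / L / ρ ^ 2) ≤ L * (A * ρ / L / ρ ^ 2) := by gcongr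
        _ = _ := by field_simp
    have h5 : A / ρ = A * (1 / ρ) := by ring
    rw [h3A]
    rw [h5] at e
    nlinarith
  · intro n hn
    have hn' : (n : ℝ) + 1 ≤ ((M + 2 : ℕ) : ℝ) := by
      have : n + 1 ≤ M + 2 := by omega
      exact_mod_cast this
    have hn0 : (0 : ℝ) ≤ n := by positivity
    obtain ⟨ζ, hζ, he⟩ := mvt_forward (ψ 0) (ψ 1) n 1 one_pos
      (fun y hy => hd 0 y ⟨by linarith [hy.1], by linarith [hy.2]⟩)
    have := h1 ζ ⟨by linarith [hζ.1], by linarith [hζ.2]⟩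
    push_cast
    rw [he, one_mul]
    exact ⟨this.1, this.2.trans hAρ⟩
  · intro n hn
    have hn' : (n : ℝ) + 2 ≤ ((M + 2 : ℕ) : ℝ) := by
      have : n + 2 ≤ M + 2 := by omega
      exact_mod_cast this
    have hn0 : (0 : ℝ) ≤ n := by positivity
    obtain ⟨ζ, hζ, he⟩ := mvt_forward (fun y => ψ 0 (y + 1) - ψ 0 y)
      (fun y => ψ 1 (y + 1) - ψ 1 y) n 1 one_pos
      (fun y hy => HasDerivAt.sub
        (HasDerivAt.comp_add_const y 1 (hd 0 (y + 1) ⟨by linarith [hy.1], by linarith [hy.2]⟩))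
        (hd 0 y ⟨by linarith [hy.1], by linarith [hy.2]⟩))
    obtain ⟨ζ', hζ', he'⟩ := mvt_forward (ψ 1) (ψ 2) ζ 1 one_pos
      (fun y hy => hd 1 y ⟨by linarith [hy.1, hζ.1], by linarith [hy.2, hζ.2]⟩)
    have := h2 ζ' ⟨by linarith [hζ'.1, hζ.1], by linarith [hζ'.2, hζ.2]⟩
    push_cast
    have e : (n : ℝ) + 2 = n + 1 + 1 := by ring
    rw [e, he, one_mul, he', one_mul]
    exact this

/-- The choice of the differencing length `H = min(⌈1 / r⌉, L)`; it is applied with `r = ρ^{1/2}`, where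
`ρ` is the size of the derivative in the derivative test. -/
lemma exists_shift (k L : ℕ) (hL : 1 ≤ L) (r : ℝ) (hr : 0 < r) (hr1 : r ≤ 1)
    (hM : 1 ≤ r ^ 2 * (L : ℝ) ^ (k + 2)) :
    ∃ H : ℕ, 1 ≤ H ∧ H ≤ L ∧ H * r ^ 2 ≤ 2 * r ∧ 1 / (H : ℝ) ≤ r + 1 / L ∧
      √(r ^ 2 * (L : ℝ) ^ (k + 2)) ≤ H * r ^ 2 * (L : ℝ) ^ (k + 1) := by
  have hLr : (1 : ℝ) ≤ L := by exact_mod_cast hL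
  have hL0 : (0 : ℝ) < L := by linarith
  have hc1 := Nat.le_ceil (1 / r)
  have hc2 := (Nat.ceil_lt_add_one (one_div_pos.2 hr).le).le
  have h1r : 1 ≤ 1 / r := by rw [le_div_iff₀ hr]; linarith
  have hrr : 1 / r * r ^ 2 = r := by field_simp
  rcases le_total ⌈1 / r⌉₊ L with h | h
  · refine ⟨⌈1 / r⌉₊, ?_, h, ?_, ?_, ?_⟩
    · have : (1 : ℝ) ≤ ⌈1 / r⌉₊ := h1r.trans hc1
      exact_mod_cast this
    · calc (⌈1 / r⌉₊ : ℝ) * r ^ 2 ≤ (2 * (1 / r)) * r ^ 2 := by gcongr; linarith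
        _ = _ := by rw [mul_assoc, hrr]
    · have : 1 / (⌈1 / r⌉₊ : ℝ) ≤ 1 / (1 / r) := one_div_le_one_div_of_le (by positivity) hc1
      rw [one_div_one_div] at this
      have : 0 ≤ 1 / (L : ℝ) := by positivity
      linarith
    · have h3 : r * (L : ℝ) ^ (k + 1) ≤ ⌈1 / r⌉₊ * r ^ 2 * (L : ℝ) ^ (k + 1) := by
        have : r ≤ ⌈1 / r⌉₊ * r ^ 2 := hrr.symm.le.trans (by gcongr)
        gcongr
      refine le_trans (Real.sqrt_le_iff.2 ⟨by positivity, ?_⟩) h3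
      rw [mul_pow, ← pow_mul]
      gcongr
      omega
  · refine ⟨L, hL, le_rfl, ?_, ?_, ?_⟩
    · calc (L : ℝ) * r ^ 2 ≤ ⌈1 / r⌉₊ * r ^ 2 := by gcongr
        _ ≤ (2 * (1 / r)) * r ^ 2 := by gcongr; linarith
        _ = _ := by rw [mul_assoc, hrr]
    · linarith
    · have : (L : ℝ) * r ^ 2 * (L : ℝ) ^ (k + 1) = r ^ 2 * (L : ℝ) ^ (k + 2) := by ring
      rw [this]
      refine Real.sqrt_le_iff.2 ⟨by linarith, ?_⟩
      nlinarith

/-! ### Higher derivative tests -/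

/-- The `(k+1)`-st derivative test. The functions `ψ j` are the successive derivatives of the
phase `ψ 0`; the `(k+1)`-st one lies between `ρ` and `A ρ` in absolute value and its derivative is
at most `A ρ / L`. The sum over an interval of length at most `L` then saves a power of the smallest
of `ρ L^{k+1}`, `ρ⁻¹`, `L`. Each induction step is one application of van der Corput's inequality with `H ≈ ρ^{-1/2}`. -/
lemma derivative_test (A : ℝ) (hA : 1 ≤ A) (k : ℕ) :
    ∃ C κ : ℝ, 1 ≤ C ∧ 0 < κ ∧ κ ≤ 1 / 2 ∧
      ∀ (L L' : ℕ) (ρ : ℝ) (ψ : ℕ → ℝ → ℝ), 1 ≤ L → L' ≤ L → 0 < ρ →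
      (∀ j, ∀ x ∈ Set.Icc (0 : ℝ) L', HasDerivAt (ψ j) (ψ (j + 1) x) x) →
      (∀ x ∈ Set.Icc (0 : ℝ) L', ρ ≤ |ψ (k + 1) x| ∧ |ψ (k + 1) x| ≤ A * ρ) →
      (∀ x ∈ Set.Icc (0 : ℝ) L', |ψ (k + 2) x| ≤ A * ρ / L) →
      ‖∑ n ∈ range L', eC (ψ 0 n)‖ ≤
        C * L * ((ρ * (L : ℝ) ^ (k + 1)) ^ (-κ) + ρ ^ κ + (L : ℝ) ^ (-κ)) := by
  induction k with
  | zero =>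
    refine ⟨3 * A, 1 / 2, by linarith, by norm_num, le_rfl, ?_⟩
    intro L L' ρ ψ hL hL' hρ hd h1 h2
    have := derivative_test_one A hA L L' ρ ψ hL hL' hρ hd h1 h2
    simpa using this
  | succ k ih =>
    obtain ⟨C, κ, hC, hκ, hκ2, ih⟩ := ih
    refine ⟨10 * C, κ / 4, by linarith, by linarith, by linarith, ?_⟩
    intro L L' ρ ψ hL hL' hρ hd h1 h2
    have hLr : (1 : ℝ) ≤ L := by exact_mod_cast hL
    have hL0 : (0 : ℝ) < L := by linarith
    set S := ‖∑ n ∈ range L', eC (ψ 0 n)‖ with hS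
    have htriv : S ≤ L :=
      (norm_sum_eC_le _ _).trans (by rw [card_range]; exact_mod_cast hL')
    set M : ℝ := ρ * (L : ℝ) ^ (k + 1 + 1) with hMdef
    have hM0 : 0 < M := by positivity
    set U := M ^ (-(κ / 4)) with hU
    set V := ρ ^ (κ / 4) with hV
    set W := (L : ℝ) ^ (-(κ / 4)) with hW
    have hU0 : 0 ≤ U := by positivity
    have hV0 : 0 ≤ V := by positivity
    have hW0 : 0 ≤ W := by positivity
    have htriv' : 1 ≤ U + V + W → S ≤ 10 * C * L * (U + V + W) := fun h => by
      calc S ≤ 1 * L * 1 := by linarith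
        _ ≤ 10 * C * L * (U + V + W) := by gcongr; linarith
    -- the trivial bound suffices unless `ρ < 1 < M`
    by_cases hρ1 : 1 ≤ ρ
    · exact htriv' (by have : 1 ≤ V := Real.one_le_rpow hρ1 (by linarith)
                       linarith)
    push Not at hρ1
    by_cases hM1 : M ≤ 1
    · exact htriv' (by
        have : 1 ≤ U := Real.one_le_rpow_of_pos_of_le_one_of_nonpos hM0 hM1 (by linarith)
        linarith)
    push Not at hM1
    have hr2 : √ρ ^ 2 = ρ := Real.sq_sqrt hρ.le
    have hr0 : 0 < √ρ := Real.sqrt_pos.2 hρ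
    have hr1 : √ρ ≤ 1 := Real.sqrt_le_one.2 hρ1.le
    obtain ⟨H, hH1, hHL, hHρ, hHinv, hHM⟩ := exists_shift k L hL (√ρ) hr0 hr1
      (by rw [hr2]; exact hM1.le)
    rw [hr2] at hHρ hHM
    have hH0 : (0 : ℝ) < H := by exact_mod_cast hH1
    -- the phase differenced by `d` satisfies the hypotheses of order `k` with `d ρ` in place of `ρ`
    have hSd : ∀ d ∈ Ico 1 H, ‖∑ n ∈ range (L' - d), eC (ψ 0 ((n + d : ℕ) : ℝ) - ψ 0 n)‖ ≤
        C * L * ((d : ℝ) ^ (-κ) * (ρ * (L : ℝ) ^ (k + 1)) ^ (-κ) + (H * ρ) ^ κ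
          + (L : ℝ) ^ (-κ)) := by
      intro d hdm
      obtain ⟨hd1, hd2⟩ := mem_Ico.1 hdm
      have hd0 : (0 : ℝ) < d := by exact_mod_cast hd1
      rcases Nat.lt_or_ge L' d with hlt | hge
      · rw [Nat.sub_eq_zero_of_le hlt.le]
        simp only [range_zero, sum_empty, norm_zero]
        positivity
      have hcast : ((L' - d : ℕ) : ℝ) = L' - d := by push_cast [hge]; ring
      have hin : ∀ x ∈ Set.Icc (0 : ℝ) (L' - d : ℕ), ∀ y ∈ Set.Icc x (x + d),
          y ∈ Set.Icc (0 : ℝ) L' := fun x hx y hy => by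
        rw [hcast] at hx
        exact ⟨hx.1.trans hy.1, by linarith [hx.2, hy.2]⟩
      have hstep : ∀ j, ∀ x ∈ Set.Icc (0 : ℝ) (L' - d : ℕ), ∃ ζ ∈ Set.Icc (0 : ℝ) L',
          ψ j (x + d) - ψ j x = d * ψ (j + 1) ζ := fun j x hx => by
        obtain ⟨ζ, hζ, he⟩ := mvt_forward (ψ j) (ψ (j + 1)) x d hd0
          (fun y hy => hd j y (hin x hx y hy))
        exact ⟨ζ, hin x hx ζ hζ, he⟩
      have hI := ih L (L' - d) (d * ρ) (fun j x => ψ j (x + d) - ψ j x) hL (by omega)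
        (by positivity) ?_ ?_ ?_
      · have e1 : (d * ρ * (L : ℝ) ^ (k + 1)) ^ (-κ) =
            (d : ℝ) ^ (-κ) * (ρ * (L : ℝ) ^ (k + 1)) ^ (-κ) := by
          rw [mul_assoc, Real.mul_rpow hd0.le (by positivity)]
        rw [e1] at hI
        push_cast
        refine hI.trans ?_
        gcongr
      · intro j x hx
        refine HasDerivAt.sub (HasDerivAt.comp_add_const x d (hd j (x + d) ?_)) (hd j x ?_)
        · exact hin x hx _ ⟨by linarith, le_rfl⟩
        · exact hin x hx _ ⟨le_rfl, by linarith⟩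
      · intro x hx
        obtain ⟨ζ, hζ, he⟩ := hstep (k + 1) x hx
        have := h1 ζ hζ
        rw [he, abs_mul, abs_of_pos hd0]
        refine ⟨by gcongr; exact this.1, ?_⟩
        calc (d : ℝ) * |ψ (k + 1 + 1) ζ| ≤ d * (A * ρ) := by gcongr; exact this.2
          _ = _ := by ring
      · intro x hx
        obtain ⟨ζ, hζ, he⟩ := hstep (k + 2) x hx
        have := h2 ζ hζ
        rw [he, abs_mul, abs_of_pos hd0]
        calc (d : ℝ) * |ψ (k + 2 + 1) ζ| ≤ d * (A * ρ / L) := by gcongr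
          _ = _ := by ring
    have hsum : ∑ d ∈ Ico 1 H, ‖∑ n ∈ range (L' - d), eC (ψ 0 ((n + d : ℕ) : ℝ) - ψ 0 n)‖ ≤
        C * L * (H * (2 * (H * ρ * (L : ℝ) ^ (k + 1)) ^ (-κ) + (H * ρ) ^ κ + (L : ℝ) ^ (-κ))) := by
      have hs : ∑ d ∈ Ico 1 H, (d : ℝ) ^ (-κ) ≤ 2 * ((H : ℝ) * (H : ℝ) ^ (-κ)) :=
        (sum_le_sum_of_subset_of_nonneg (Ico_subset_Ico_right (by omega))
          (fun _ _ _ => by positivity)).trans (sum_rpow_neg_le κ hκ hκ2 H hH1)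
      have hcard : ((Ico 1 H).card : ℝ) ≤ H := by
        rw [Nat.card_Ico]; exact_mod_cast Nat.sub_le _ _
      have e1 : (H * ρ * (L : ℝ) ^ (k + 1)) ^ (-κ) =
          (H : ℝ) ^ (-κ) * (ρ * (L : ℝ) ^ (k + 1)) ^ (-κ) := by
        rw [mul_assoc, Real.mul_rpow hH0.le (by positivity)]
      refine (sum_le_sum hSd).trans ?_
      rw [← mul_sum, sum_add_distrib, sum_add_distrib, ← sum_mul, sum_const, sum_const,
        nsmul_eq_mul, nsmul_eq_mul, e1]
      gcongr
      calc _ ≤ 2 * ((H : ℝ) * (H : ℝ) ^ (-κ)) * (ρ * (L : ℝ) ^ (k + 1)) ^ (-κ) +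
            H * (H * ρ) ^ κ + H * (L : ℝ) ^ (-κ) := by gcongr
        _ = _ := by ring
    have hvdc := van_der_corput_exp (fun n => ψ 0 n) L' L H hL' hHL
    rw [← hS] at hvdc
    set T := 2 * (H * ρ * (L : ℝ) ^ (k + 1)) ^ (-κ) + (H * ρ) ^ κ + (L : ℝ) ^ (-κ) with hT
    have hS2 : S ^ 2 ≤ 2 * L ^ 2 * (1 / H + 2 * C * T) := by
      refine le_of_mul_le_mul_left ?_ hH0
      calc (H : ℝ) * S ^ 2 ≤ _ := hvdc
        _ ≤ 2 * L * (L + 2 * (C * L * (H * T))) := by gcongr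
        _ = _ := by field_simp
    have hsqrt : ∀ y : ℝ, 0 ≤ y → ∀ t : ℝ, √y ^ t = y ^ (t / 2) := fun y hy t => by
      rw [Real.sqrt_eq_rpow, ← Real.rpow_mul hy]; congr 1; ring
    have hsq : ∀ y t : ℝ, 0 < y → (y ^ (t / 4)) ^ 2 = y ^ (t / 2) := fun y t hy => by
      rw [← Real.rpow_natCast, ← Real.rpow_mul hy.le]; congr 1; push_cast; ring
    have hT1 : (H * ρ * (L : ℝ) ^ (k + 1)) ^ (-κ) ≤ U ^ 2 := by
      calc _ ≤ √M ^ (-κ) :=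
            Real.rpow_le_rpow_of_nonpos (Real.sqrt_pos.2 hM0) hHM (by linarith)
        _ = U ^ 2 := by rw [hsqrt M hM0.le, hU, ← neg_div, hsq M _ hM0]
    have hT2 : (H * ρ) ^ κ ≤ 2 * V ^ 2 := by
      calc (H * ρ) ^ κ ≤ (2 * √ρ) ^ κ := by gcongr
        _ = 2 ^ κ * √ρ ^ κ := Real.mul_rpow (by norm_num) hr0.le
        _ ≤ 2 ^ (1 : ℝ) * √ρ ^ κ := by
            gcongr
            · norm_num
            · linarith
        _ = 2 * V ^ 2 := by rw [hsqrt ρ hρ.le, hV, hsq ρ _ hρ, Real.rpow_one]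
    have hT3 : (L : ℝ) ^ (-κ) ≤ W ^ 2 := by
      rw [hW, ← neg_div, hsq _ _ hL0]
      exact Real.rpow_le_rpow_of_exponent_le hLr (by linarith)
    have hT4 : 1 / (H : ℝ) ≤ V ^ 2 + W ^ 2 := by
      have a1 : √ρ ≤ V ^ 2 := by
        rw [hV, hsq _ _ hρ, Real.sqrt_eq_rpow]
        exact Real.rpow_le_rpow_of_exponent_ge hρ hρ1.le (by linarith)
      have a2 : 1 / (L : ℝ) ≤ W ^ 2 := by
        rw [hW, ← neg_div, hsq _ _ hL0, one_div, ← Real.rpow_neg_one]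
        exact Real.rpow_le_rpow_of_exponent_le hLr (by linarith)
      linarith
    have hTb : 1 / (H : ℝ) + 2 * C * T ≤ 5 * C * (U + V + W) ^ 2 := by
      have : T ≤ 2 * U ^ 2 + 2 * V ^ 2 + W ^ 2 := by rw [hT]; linarith
      have h3 : 2 * C * T ≤ 2 * C * (2 * U ^ 2 + 2 * V ^ 2 + W ^ 2) := by gcongr
      have h4 : V ^ 2 + W ^ 2 ≤ C * (V ^ 2 + W ^ 2) := le_mul_of_one_le_left (by positivity) hC
      have h5 : 0 ≤ C * (U ^ 2 + 2 * W ^ 2 + 10 * (U * V + V * W + U * W)) := by positivity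
      have h6 : 5 * C * (U + V + W) ^ 2 = C * (V ^ 2 + W ^ 2) +
          2 * C * (2 * U ^ 2 + 2 * V ^ 2 + W ^ 2) +
          C * (U ^ 2 + 2 * W ^ 2 + 10 * (U * V + V * W + U * W)) := by ring
      linarith
    have hS0 : 0 ≤ S := norm_nonneg _
    have hR0 : 0 ≤ 10 * C * L * (U + V + W) := by positivity
    refine (sq_le_sq₀ hS0 hR0).1 ?_
    calc S ^ 2 ≤ 2 * L ^ 2 * (5 * C * (U + V + W) ^ 2) :=
          hS2.trans (mul_le_mul_of_nonneg_left hTb (by positivity))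
      _ = 10 * C * L ^ 2 * (U + V + W) ^ 2 := by ring
      _ ≤ (10 * C) ^ 2 * L ^ 2 * (U + V + W) ^ 2 := by
          gcongr; nlinarith
      _ = _ := by ring

/-! ### Derivatives of the phase `∑ λ_i t ^ c_i` -/

/-- The falling factorial `c (c - 1) ⋯ (c - k + 1)`. -/
def fallFac (c : ℝ) (k : ℕ) : ℝ := (descPochhammer ℝ k).eval c

lemma fallFac_succ (c : ℝ) (k : ℕ) : fallFac c (k + 1) = fallFac c k * (c - k) :=
  descPochhammer_succ_eval k c

lemma fallFac_zero (c : ℝ) : fallFac c 0 = 1 := by simp [fallFac]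

lemma fallFac_add (c : ℝ) (K j : ℕ) : fallFac c (K + j) = fallFac c K * fallFac (c - K) j := by
  induction j with
  | zero => simp [fallFac_zero]
  | succ j ih => rw [← add_assoc, fallFac_succ, ih, fallFac_succ]; push_cast; ring

lemma fallFac_ne_zero (c : ℝ) (hc : ∀ k : ℤ, c ≠ k) (K : ℕ) : fallFac c K ≠ 0 := by
  induction K with
  | zero => simp [fallFac_zero]
  | succ K ih =>
    rw [fallFac_succ]
    exact mul_ne_zero ih (sub_ne_zero.2 (by exact_mod_cast hc K))

/-- Non-degeneracy: the `m × m` matrix of falling factorials of orders `K, …, K + m - 1` is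
invertible. Up to the factors `fallFac (c i) K`, which do not vanish because `c i` is not an integer,
its entries are monic polynomials of degrees `0, …, m - 1` evaluated at the distinct points
`c i - K`, so its determinant is a nonzero multiple of a Vandermonde determinant. -/
lemma exists_large_order {m : ℕ} (hm : 0 < m) (c : Fin m → ℝ) (hinj : Function.Injective c)
    (hint : ∀ i, ∀ k : ℤ, c i ≠ (k : ℝ)) (K : ℕ) :
    ∃ δ : ℝ, 0 < δ ∧ ∀ u : Fin m → ℝ, ∃ j : Fin m,
      δ * ∑ i, |u i| ≤ |∑ i, fallFac (c i) (K + j) * u i| := by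
  set B : Matrix (Fin m) (Fin m) ℝ :=
    Matrix.of fun i j => (descPochhammer ℝ (j : ℕ)).eval (c i - K) with hB
  have hdet : B.det ≠ 0 := by
    have h := Matrix.det_eval_matrixOfPolynomials_eq_det_vandermonde (fun i => c i - K)
      (fun j : Fin m => descPochhammer ℝ (j : ℕ)) (fun j => descPochhammer_natDegree (R := ℝ) j)
      (fun j => monic_descPochhammer ℝ j)
    rw [hB, ← h, Matrix.det_vandermonde_ne_zero_iff]
    intro a b hab
    exact hinj (by simpa using hab)
  have hunit : IsUnit B.det := isUnit_iff_ne_zero.2 hdet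
  set D : ℝ := ∑ i, ∑ j, |B⁻¹ j i| / |fallFac (c i) K| + 1 with hD
  have hD0 : 0 < D := by positivity
  refine ⟨1 / D, by positivity, fun u => ?_⟩
  by_contra hcon
  push Not at hcon
  set v : Fin m → ℝ := fun j => ∑ i, fallFac (c i) (K + j) * u i with hv
  set s := ∑ i, |u i| with hs
  have hs0 : 0 < s := by
    have := (abs_nonneg _).trans_lt (hcon ⟨0, hm⟩)
    exact (pos_iff_pos_of_mul_pos this).1 (by positivity)
  have hvB : v = Matrix.vecMul (fun i => fallFac (c i) K * u i) B := by
    ext j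
    simp only [hv, Matrix.vecMul, dotProduct, hB, Matrix.of_apply]
    refine sum_congr rfl fun i _ => ?_
    rw [fallFac_add]; unfold fallFac; ring
  have hu : (fun i => fallFac (c i) K * u i) = Matrix.vecMul v B⁻¹ := by
    rw [hvB, Matrix.vecMul_vecMul, Matrix.mul_nonsing_inv _ hunit, Matrix.vecMul_one]
  have hui : ∀ i, |u i| ≤ ∑ j, (1 / D * s) * (|B⁻¹ j i| / |fallFac (c i) K|) := by
    intro i
    have hne := abs_pos.2 (fallFac_ne_zero (c i) (hint i) K)
    have h1 := congrFun hu i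
    simp only [Matrix.vecMul, dotProduct] at h1
    have h2 : |fallFac (c i) K| * |u i| ≤ ∑ j, (1 / D * s) * |B⁻¹ j i| := by
      rw [← abs_mul, h1]
      refine (abs_sum_le_sum_abs _ _).trans (sum_le_sum fun j _ => ?_)
      rw [abs_mul]
      exact mul_le_mul_of_nonneg_right (hcon j).le (abs_nonneg _)
    calc |u i| = |fallFac (c i) K| * |u i| / |fallFac (c i) K| := by field_simp
      _ ≤ (∑ j, (1 / D * s) * |B⁻¹ j i|) / |fallFac (c i) K| := by gcongr
      _ = _ := by rw [sum_div]; simp_rw [mul_div_assoc]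
  have : s ≤ (1 / D * s) * (D - 1) := by
    calc s ≤ ∑ i, ∑ j, (1 / D * s) * (|B⁻¹ j i| / |fallFac (c i) K|) := sum_le_sum fun i _ => hui i
      _ = _ := by simp_rw [← mul_sum]; rw [hD]; ring
  have h3 : (1 / D * s) * (D - 1) = s - s / D := by field_simp
  have : 0 < s / D := by positivity
  linarith

/-- The `k`-th derivative of the phase `∑ i, lam i * t ^ c i`. -/
def phase {m : ℕ} (c lam : Fin m → ℝ) (k : ℕ) (t : ℝ) : ℝ :=
  ∑ i, lam i * fallFac (c i) k * t ^ (c i - k)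

lemma hasDerivAt_phase {m : ℕ} (c lam : Fin m → ℝ) (k : ℕ) (t : ℝ) (ht : 0 < t) :
    HasDerivAt (phase c lam k) (phase c lam (k + 1) t) t := by
  unfold phase
  refine HasDerivAt.fun_sum fun i _ => ?_
  have h := (Real.hasDerivAt_rpow_const (x := t) (p := c i - k) (Or.inl ht.ne')).const_mul
    (lam i * fallFac (c i) k)
  have e : c i - ((k + 1 : ℕ) : ℝ) = c i - k - 1 := by push_cast; ring
  have e' : lam i * fallFac (c i) (k + 1) * t ^ (c i - ((k + 1 : ℕ) : ℝ)) =
      lam i * fallFac (c i) k * ((c i - k) * t ^ (c i - k - 1)) := by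
    rw [fallFac_succ, e]; ring
  rw [e']
  exact h

lemma rpow_compare (E : ℝ) (N t e : ℝ) (hN : 0 < N) (h1 : N / 2 ≤ t) (h2 : t ≤ 2 * N)
    (he : |e| ≤ E) : t ^ e ≤ 2 ^ E * N ^ e ∧ N ^ e ≤ 2 ^ E * t ^ e := by
  have ht : 0 < t := by linarith
  have key : ∀ a b : ℝ, 0 < a → 0 < b → a ≤ 2 * b → b ≤ 2 * a → a ^ e ≤ 2 ^ E * b ^ e := by
    intro a b ha hb hab hba
    rcases le_total 0 e with h0 | h0
    · calc a ^ e ≤ (2 * b) ^ e := by gcongr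
        _ = 2 ^ e * b ^ e := Real.mul_rpow (by norm_num) hb.le
        _ ≤ _ := by
          gcongr
          · norm_num
          · exact (le_abs_self e).trans he
    · calc a ^ e ≤ (b / 2) ^ e :=
            Real.rpow_le_rpow_of_nonpos (by positivity) (by linarith) h0
        _ = 2 ^ (-e) * b ^ e := by
            rw [div_eq_inv_mul, Real.mul_rpow (by norm_num) hb.le,
              Real.inv_rpow (by norm_num), Real.rpow_neg (by norm_num)]
        _ ≤ _ := by
          gcongr
          · norm_num
          · exact (neg_le_abs e).trans he
  exact ⟨key t N ht hN h2 (by linarith), key N t hN ht (by linarith) h2⟩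

/-- Size of the derivatives of the phase on `[N/2, 2N]` in terms of `∑ |lam i| N^{c i}`: upper
bounds for all orders, and at each point a matching lower bound for one of `m` consecutive ones. -/
lemma phase_bounds {m : ℕ} (hm : 0 < m) (c : Fin m → ℝ) (hinj : Function.Injective c)
    (hint : ∀ i, ∀ k : ℤ, c i ≠ (k : ℝ)) (K : ℕ) :
    ∃ A δ : ℝ, 0 < A ∧ 0 < δ ∧ ∀ (N : ℝ) (lam : Fin m → ℝ) (t : ℝ), 0 < N → N / 2 ≤ t → t ≤ 2 * N →
      (∀ k ≤ K + m + 1, |phase c lam k t| ≤ A * ((∑ i, |lam i| * N ^ c i) / N ^ k)) ∧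
      ∃ j : Fin m, δ * ((∑ i, |lam i| * N ^ c i) / N ^ (K + (j : ℕ))) ≤
        |phase c lam (K + j) t| := by
  obtain ⟨δ, hδ, hlow⟩ := exists_large_order hm c hinj hint K
  set E : ℝ := ∑ i, |c i| + (K + m + 1) with hE
  set P : ℝ := 2 ^ E with hP
  have hP0 : 0 < P := by positivity
  have hci : ∀ i, |c i| ≤ ∑ i, |c i| := fun i =>
    single_le_sum (f := fun i => |c i|) (fun _ _ => abs_nonneg _) (mem_univ i)
  have hEk : ∀ k ≤ K + m + 1, ∀ i, |c i - k| ≤ E := fun k hk i => by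
    have hk' : (k : ℝ) ≤ K + m + 1 := by exact_mod_cast hk
    have : |c i - k| ≤ |c i| + |(k : ℝ)| := abs_sub _ _
    rw [abs_of_nonneg (Nat.cast_nonneg k : (0 : ℝ) ≤ k)] at this
    linarith [hci i]
  have hEc : ∀ i, |c i| ≤ E := fun i => by
    have := hEk 0 (Nat.zero_le _) i; simpa using this
  set D : ℝ := ∑ i, ∑ k ∈ range (K + m + 2), |fallFac (c i) k| + 1 with hD
  have hD0 : 0 < D := by positivity
  have hDk : ∀ k ≤ K + m + 1, ∀ i, |fallFac (c i) k| ≤ D := fun k hk i => by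
    have h1 : |fallFac (c i) k| ≤ ∑ k ∈ range (K + m + 2), |fallFac (c i) k| :=
      single_le_sum (f := fun k => |fallFac (c i) k|) (fun _ _ => abs_nonneg _)
        (mem_range.2 (by omega))
    have h2 : ∑ k ∈ range (K + m + 2), |fallFac (c i) k| ≤
        ∑ i, ∑ k ∈ range (K + m + 2), |fallFac (c i) k| :=
      single_le_sum (f := fun i => ∑ k ∈ range (K + m + 2), |fallFac (c i) k|)
        (fun _ _ => by positivity) (mem_univ i)
    linarith
  refine ⟨D * P, δ / (P * P), by positivity, by positivity, ?_⟩
  intro N lam t hN ht1 ht2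
  have ht : 0 < t := by linarith
  constructor
  · intro k hk
    unfold phase
    refine (abs_sum_le_sum_abs _ _).trans ?_
    rw [sum_div, mul_sum]
    refine sum_le_sum fun i _ => ?_
    rw [abs_mul, abs_mul, abs_of_pos (Real.rpow_pos_of_pos ht _)]
    calc |lam i| * |fallFac (c i) k| * t ^ (c i - k) ≤ |lam i| * D * (P * N ^ (c i - k)) := by
          gcongr
          · exact hDk k hk i
          · exact (rpow_compare E N t _ hN ht1 ht2 (hEk k hk i)).1
      _ = _ := by rw [Real.rpow_sub hN, Real.rpow_natCast]; ring
  · obtain ⟨j, hj⟩ := hlow (fun i => lam i * t ^ c i)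
    refine ⟨j, ?_⟩
    have hphase : phase c lam (K + j) t =
        (∑ i, fallFac (c i) (K + j) * (lam i * t ^ c i)) / t ^ (K + (j : ℕ)) := by
      unfold phase
      rw [sum_div]
      refine sum_congr rfl fun i _ => ?_
      rw [Real.rpow_sub ht, Real.rpow_natCast]; ring
    have hu : (∑ i, |lam i| * N ^ c i) / P ≤ ∑ i, |lam i * t ^ c i| := by
      rw [sum_div]
      refine sum_le_sum fun i _ => ?_
      rw [abs_mul, abs_of_pos (Real.rpow_pos_of_pos ht _), mul_div_assoc]
      gcongr
      rw [div_le_iff₀ hP0, mul_comm]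
      exact (rpow_compare E N t _ hN ht1 ht2 (hEc i)).2
    have htk : t ^ (K + (j : ℕ)) ≤ P * N ^ (K + (j : ℕ)) := by
      have := (rpow_compare E N t ((K + (j : ℕ) : ℕ) : ℝ) hN ht1 ht2 ?_).1
      · rwa [Real.rpow_natCast, Real.rpow_natCast] at this
      · rw [abs_of_nonneg (Nat.cast_nonneg _)]
        have h1 : ((K + (j : ℕ) : ℕ) : ℝ) ≤ K + m + 1 := by
          have : K + (j : ℕ) ≤ K + m + 1 := by omega
          exact_mod_cast this
        have : 0 ≤ ∑ i, |c i| := by positivity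
        linarith
    rw [hphase, abs_div, abs_of_pos (pow_pos ht _)]
    have hΛ : 0 ≤ ∑ i, |lam i| * N ^ c i := by positivity
    calc δ / (P * P) * ((∑ i, |lam i| * N ^ c i) / N ^ (K + (j : ℕ)))
        = δ * ((∑ i, |lam i| * N ^ c i) / P) / (P * N ^ (K + (j : ℕ))) := by field_simp
      _ ≤ |∑ i, fallFac (c i) (K + j) * (lam i * t ^ c i)| / t ^ (K + (j : ℕ)) := by
          gcongr
          refine le_trans ?_ hj
          gcongr

/-! ### Exponential sums with phase `∑ λ_i n ^ c_i` -/

/-- Splitting a sum into `J` blocks of length at most `L`. -/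
lemma norm_sum_le_blocks (g : ℕ → ℂ) (L : ℕ) (B : ℝ) (hB : 0 ≤ B) (b J : ℕ) :
    ∀ a, (∀ a' L', a ≤ a' → a' + L' ≤ b → L' ≤ L → ‖∑ k ∈ range L', g (a' + k)‖ ≤ B) →
      b ≤ a + J * L → ‖∑ n ∈ Ico a b, g n‖ ≤ J * B := by
  induction J with
  | zero =>
    intro a _ hb
    rw [Ico_eq_empty (by omega)]; simp
  | succ J ih =>
    intro a h hb
    rcases Nat.lt_or_ge b (a + L) with hlt | hge
    · rcases Nat.lt_or_ge b a with hba | hab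
      · rw [Ico_eq_empty (by omega)]; simp; positivity
      · rw [sum_Ico_eq_sum_range]
        refine (h a (b - a) le_rfl (by omega) (by omega)).trans ?_
        push_cast
        nlinarith [mul_nonneg (Nat.cast_nonneg (α := ℝ) J) hB]
    · rw [← sum_Ico_consecutive _ (Nat.le_add_right a L) hge]
      have h1 := ih (a + L) (fun a' L' ha => h a' L' (by omega)) (by
        rw [add_mul, one_mul] at hb; omega)
      have h2 := h a L le_rfl hge le_rfl
      rw [sum_Ico_eq_sum_range, Nat.add_sub_cancel_left]
      refine (norm_add_le _ _).trans ?_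
      push_cast
      linarith

lemma phase_zero {m : ℕ} (c lam : Fin m → ℝ) (t : ℝ) :
    phase c lam 0 t = ∑ i, lam i * t ^ c i := by
  simp [phase, fallFac_zero]

lemma rpow_neg_le_of_div_le {y Y G κ κ' : ℝ} (hY : 1 ≤ Y) (hG : 1 ≤ G) (hy : Y / G ≤ y)
    (hκ : 0 < κ) (hκ' : κ ≤ κ') (h1 : κ' ≤ 1) : y ^ (-κ') ≤ G * Y ^ (-κ) := by
  have hY0 : 0 < Y := by linarith
  have hG0 : 0 < G := by linarith
  calc y ^ (-κ') ≤ (Y / G) ^ (-κ') := Real.rpow_le_rpow_of_nonpos (by positivity) hy (by linarith)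
    _ = G ^ κ' * Y ^ (-κ') := by
        rw [Real.div_rpow hY0.le hG0.le, Real.rpow_neg hG0.le]; field_simp
    _ ≤ G ^ (1 : ℝ) * Y ^ (-κ) := by
        gcongr
    _ = _ := by rw [Real.rpow_one]

/-- On a block of length at most `N / A` one of the derivatives of the phase of orders
`K0 + 1, …, K0 + m` is large throughout, so the derivative test applies. -/
lemma exp_sum_block {m : ℕ} (hm : 0 < m) (c : Fin m → ℝ) (hinj : Function.Injective c)
    (hint : ∀ i, ∀ k : ℤ, c i ≠ (k : ℝ)) (K0 : ℕ) :
    ∃ A δ κ C : ℝ, 1 ≤ A ∧ 0 < δ ∧ 0 < κ ∧ κ ≤ 1 / 2 ∧ 1 ≤ C ∧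
      ∀ (N : ℕ) (lam : Fin m → ℝ) (L L' a : ℕ), 1 ≤ N → 1 ≤ L → L' ≤ L → A * L ≤ N →
        N / 2 + 1 ≤ a → a + L' ≤ N + 1 → 0 < ∑ i, |lam i| * (N : ℝ) ^ c i →
        ∃ k κ' : ℝ, ∃ j : ℕ, K0 ≤ j ∧ j < K0 + m ∧ κ ≤ κ' ∧ κ' ≤ 1 / 2 ∧
          k = δ * ((∑ i, |lam i| * (N : ℝ) ^ c i) / (N : ℝ) ^ (j + 1)) ∧
          ‖∑ n ∈ range L', eC (∑ i, lam i * ((a + n : ℕ) : ℝ) ^ c i)‖ ≤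
            C * L * ((k * (L : ℝ) ^ (j + 1)) ^ (-κ') + k ^ κ' + (L : ℝ) ^ (-κ')) := by
  obtain ⟨A0, δ, hA0, hδ, hph⟩ := phase_bounds hm c hinj hint (K0 + 1)
  set A : ℝ := 2 * A0 / δ + 1 with hA
  have hA1 : 1 ≤ A := by rw [hA]; have : 0 < 2 * A0 / δ := by positivity
                         linarith
  choose Cf κf hC1 hκ0 hκ1 htest using fun j : Fin m => derivative_test A hA1 (K0 + j)
  have : Nonempty (Fin m) := ⟨⟨0, hm⟩⟩
  obtain ⟨j0, hj0⟩ := Finite.exists_min κf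
  have hCs : ∀ j, Cf j ≤ ∑ j, Cf j := fun j =>
    single_le_sum (f := Cf) (fun i _ => by linarith [hC1 i]) (mem_univ j)
  refine ⟨A, δ / 2, κf j0, ∑ j, Cf j, hA1, by positivity, hκ0 j0, hκ1 j0,
    (hC1 j0).trans (hCs j0), ?_⟩
  intro N lam L L' a hN hL hL' hAL ha haL hΛ
  set Λ := ∑ i, |lam i| * (N : ℝ) ^ c i with hΛdef
  have hN1 : (1 : ℝ) ≤ N := by exact_mod_cast hN
  have hN0 : (0 : ℝ) < N := by linarith
  have hL1 : (1 : ℝ) ≤ L := by exact_mod_cast hL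
  have hL0 : (0 : ℝ) < L := by linarith
  have hLN : (L : ℝ) ≤ N := by nlinarith
  have haN : (N : ℝ) / 2 ≤ a := by
    have : (N : ℝ) ≤ 2 * a := by exact_mod_cast (by omega : N ≤ 2 * a)
    linarith
  have haL2 : (a : ℝ) + L' ≤ 2 * N := by
    have : (a : ℝ) + L' ≤ N + 1 := by exact_mod_cast haL
    linarith
  have hL'0 : (0 : ℝ) ≤ L' := Nat.cast_nonneg _
  have hL'L : (L' : ℝ) ≤ L := by exact_mod_cast hL'
  have hup : ∀ k ≤ K0 + 1 + m + 1, ∀ x ∈ Set.Icc (0 : ℝ) L',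
      |phase c lam k (a + x)| ≤ A0 * (Λ / N ^ k) := fun k hk x hx =>
    (hph N lam (a + x) hN0 (by linarith [hx.1]) (by linarith [hx.2])).1 k hk
  obtain ⟨j, hj⟩ := (hph N lam a hN0 haN (by linarith)).2
  rw [← hΛdef] at hj
  have ej : K0 + 1 + (j : ℕ) = K0 + j + 1 := by omega
  rw [ej] at hj
  have hjm := j.2
  set ρ : ℝ := δ / 2 * (Λ / (N : ℝ) ^ (K0 + (j : ℕ) + 1)) with hρ
  have hρ0 : 0 < ρ := by positivity
  refine ⟨ρ, κf j, K0 + j, by omega, by omega, hj0 j, hκ1 j, rfl, ?_⟩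
  have hA0ρ : A0 * (Λ / (N : ℝ) ^ (K0 + (j : ℕ) + 1)) ≤ A * ρ := by
    have : A0 * (Λ / (N : ℝ) ^ (K0 + (j : ℕ) + 1)) = (2 * A0 / δ) * ρ := by
      rw [hρ]; field_simp
    rw [this, hA]; nlinarith
  have hnext : A0 * (Λ / (N : ℝ) ^ (K0 + (j : ℕ) + 2)) ≤ A * ρ / L := by
    have e : A0 * (Λ / (N : ℝ) ^ (K0 + (j : ℕ) + 2)) =
        A0 * (Λ / (N : ℝ) ^ (K0 + (j : ℕ) + 1)) / N := by rw [pow_succ]; field_simp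
    rw [e]; gcongr
  have hdiff : (L : ℝ) * (A0 * (Λ / (N : ℝ) ^ (K0 + (j : ℕ) + 2))) ≤ ρ := by
    have e : (L : ℝ) * (A0 * (Λ / (N : ℝ) ^ (K0 + (j : ℕ) + 2))) =
        (2 * A0 / δ * L) * (ρ / N) := by rw [hρ, pow_succ]; field_simp
    have h1 : 2 * A0 / δ * L ≤ N := by rw [hA] at hAL; nlinarith
    calc _ = (2 * A0 / δ * L) * (ρ / N) := e
      _ ≤ N * (ρ / N) := by gcongr
      _ = ρ := by field_simp
  have hmain := htest j L L' ρ (fun k x => phase c lam k (a + x)) hL hL' hρ0 ?_ ?_ ?_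
  · simp only [phase_zero] at hmain
    push_cast
    refine hmain.trans ?_
    gcongr
    exact hCs j
  · intro k x hx
    have hpos : (0 : ℝ) < a + x := by linarith [hx.1]
    exact HasDerivAt.comp_const_add (a : ℝ) x (hasDerivAt_phase c lam k _ hpos)
  · intro x hx
    refine ⟨?_, (hup _ (by omega) x hx).trans hA0ρ⟩
    have hd : |phase c lam (K0 + j + 1) (a + x) - phase c lam (K0 + j + 1) a| ≤ ρ := by
      rcases eq_or_lt_of_le hx.1 with h0 | h0
      · rw [← h0]; simp [hρ0.le]
      · obtain ⟨ζ, hζ, he⟩ := mvt_forward (phase c lam (K0 + j + 1)) (phase c lam (K0 + j + 2)) a x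
          h0 (fun y hy => hasDerivAt_phase c lam _ y (by linarith [hy.1]))
        rw [he, abs_mul, abs_of_pos h0]
        have h3 := hup (K0 + j + 2) (by omega) (ζ - a)
          ⟨by linarith [hζ.1], by linarith [hζ.2, hx.2]⟩
        rw [add_sub_cancel] at h3
        refine le_trans ?_ hdiff
        gcongr
        linarith [hx.2]
    have h4 : |phase c lam (K0 + j + 1) a| ≤ |phase c lam (K0 + j + 1) (a + x)| +
        |phase c lam (K0 + j + 1) (a + x) - phase c lam (K0 + j + 1) a| := by
      have := abs_sub_abs_le_abs_sub (phase c lam (K0 + j + 1) a) (phase c lam (K0 + j + 1) (a + x))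
      rw [abs_sub_comm] at this
      linarith
    have h5 : δ * (Λ / (N : ℝ) ^ (K0 + (j : ℕ) + 1)) = 2 * ρ := by rw [hρ]; ring
    rw [h5] at hj
    linarith
  · intro x hx
    exact (hup _ (by omega) x hx).trans hnext

/-- Power saving for exponential sums with phase `∑ i, lam i * n ^ c i`, in terms of the size
`∑ |lam i| N ^ c i` of the phase. -/
lemma exp_sum_bound {m : ℕ} (hm : 0 < m) (c : Fin m → ℝ) (hinj : Function.Injective c)
    (hint : ∀ i, ∀ k : ℤ, c i ≠ (k : ℝ)) :
    ∃ C κ : ℝ, 1 ≤ C ∧ 0 < κ ∧ κ ≤ 1 / 2 ∧ ∀ (N : ℕ) (lam : Fin m → ℝ), 1 ≤ N →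
      (∀ i, |lam i| ≤ N) → 0 < ∑ i, |lam i| * (N : ℝ) ^ c i →
      ‖∑ n ∈ Ico (N / 2 + 1) (N + 1), eC (∑ i, lam i * (n : ℝ) ^ c i)‖ ≤
        C * N * ((N : ℝ) ^ (-κ) + (∑ i, |lam i| * (N : ℝ) ^ c i) ^ (-κ)) := by
  -- derivatives of order above `K0` are `O(1 / N)`, since `|lam i| N ^ c i ≤ N ^ (c i + 1)`
  obtain ⟨K0, hK0⟩ := exists_nat_ge (∑ i, |c i| + 2)
  have hci : ∀ i, c i + 2 ≤ K0 := fun i => by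
    have : |c i| ≤ ∑ i, |c i| :=
      single_le_sum (f := fun i => |c i|) (fun _ _ => abs_nonneg _) (mem_univ i)
    linarith [le_abs_self (c i)]
  obtain ⟨A, δ, κ, C, hA, hδ, hκ, hκ2, hC, hblock⟩ := exp_sum_block hm c hinj hint K0
  obtain ⟨J, hJ⟩ := exists_nat_ge (2 * A)
  have hJ1 : (1 : ℝ) ≤ J := by linarith
  have hJ0 : 0 < J := by exact_mod_cast (by linarith : (0 : ℝ) < J)
  set G1 : ℝ := (1 / δ) * J ^ (K0 + m) + 1 with hG1
  set G2 : ℝ := δ * m + 1 with hG2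
  have hG1' : 1 ≤ G1 := by rw [hG1]; have : 0 ≤ (1 / δ) * (J : ℝ) ^ (K0 + m) := by positivity
                           linarith
  have hG2' : 1 ≤ G2 := by rw [hG2]; have : 0 ≤ δ * m := by positivity
                           linarith
  set G := G1 + G2 + J with hG
  have hG' : 1 ≤ G := by rw [hG]; linarith
  refine ⟨J * (C * G), κ, ?_, hκ, hκ2, ?_⟩
  · exact one_le_mul_of_one_le_of_one_le hJ1 (one_le_mul_of_one_le_of_one_le hC hG')
  intro N lam hN hlam hΛ
  set Λ := ∑ i, |lam i| * (N : ℝ) ^ c i with hΛdef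
  have hN1 : (1 : ℝ) ≤ N := by exact_mod_cast hN
  have hN0 : (0 : ℝ) < N := by linarith
  have hU0 : 0 ≤ (N : ℝ) ^ (-κ) := by positivity
  have hV0 : 0 ≤ Λ ^ (-κ) := by positivity
  have hCG : 1 ≤ C * G := one_le_mul_of_one_le_of_one_le hC hG'
  have htriv : ‖∑ n ∈ Ico (N / 2 + 1) (N + 1), eC (∑ i, lam i * (n : ℝ) ^ c i)‖ ≤ N := by
    refine (norm_sum_eC_le (fun n => ∑ i, lam i * (n : ℝ) ^ c i) _).trans ?_
    rw [Nat.card_Ico]; exact_mod_cast (by omega)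
  have htriv' : 1 ≤ J * ((N : ℝ) ^ (-κ) + Λ ^ (-κ)) →
      ‖∑ n ∈ Ico (N / 2 + 1) (N + 1), eC (∑ i, lam i * (n : ℝ) ^ c i)‖ ≤
        J * (C * G) * N * ((N : ℝ) ^ (-κ) + Λ ^ (-κ)) := fun h => by
    refine htriv.trans ?_
    calc (N : ℝ) = 1 * N * 1 := by ring
      _ ≤ (C * G) * N * (J * ((N : ℝ) ^ (-κ) + Λ ^ (-κ))) := by gcongr
      _ = _ := by ring
  by_cases hΛ1 : Λ ≤ 1
  · refine htriv' ?_
    have : 1 ≤ Λ ^ (-κ) := Real.one_le_rpow_of_pos_of_le_one_of_nonpos hΛ hΛ1 (by linarith)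
    nlinarith
  push Not at hΛ1
  by_cases hNJ : N < J
  · refine htriv' ?_
    have h1 : (N : ℝ) ^ κ ≤ J := by
      calc (N : ℝ) ^ κ ≤ (N : ℝ) ^ (1 : ℝ) :=
            Real.rpow_le_rpow_of_exponent_le hN1 (by linarith)
        _ = N := Real.rpow_one _
        _ ≤ J := by exact_mod_cast hNJ.le
    have h2 : 1 ≤ J * (N : ℝ) ^ (-κ) := by
      rw [Real.rpow_neg hN0.le, ← div_eq_mul_inv, le_div_iff₀ (by positivity)]; linarith
    nlinarith
  push Not at hNJ
  set L := N / J + 1 with hLdef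
  have hLlow : (N : ℝ) / J ≤ L := by
    rw [div_le_iff₀ (by linarith), mul_comm]
    have : N ≤ J * L := by
      rw [hLdef]; have := Nat.lt_mul_div_succ N hJ0; exact this.le
    exact_mod_cast this
  have hLup : A * L ≤ N := by
    have h1 : ((N / J : ℕ) : ℝ) ≤ N / J := Nat.cast_div_le
    have h2 : (1 : ℝ) ≤ N / J := by
      rw [le_div_iff₀ (by linarith), one_mul]; exact_mod_cast hNJ
    have h3 : (L : ℝ) ≤ 2 * (N / J) := by rw [hLdef]; push_cast; linarith
    calc A * L ≤ A * (2 * (N / J)) := by gcongr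
      _ = 2 * A * (N / J) := by ring
      _ ≤ J * (N / J) := by gcongr
      _ = N := by field_simp
  have hL1 : 1 ≤ L := Nat.le_add_left 1 _
  have hLr1 : (1 : ℝ) ≤ L := by exact_mod_cast hL1
  have hLN : (L : ℝ) ≤ N := by nlinarith
  set B := C * N * (G * ((N : ℝ) ^ (-κ) + Λ ^ (-κ))) with hB
  have hfin := norm_sum_le_blocks (fun n => eC (∑ i, lam i * (n : ℝ) ^ c i)) L B (by positivity)
    (N + 1) J (N / 2 + 1) ?_ ?_
  · refine hfin.trans (le_of_eq ?_)
    rw [hB]; ring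
  · intro a L' ha haL hL'
    obtain ⟨ρ, κ', j, hj1, hj2, hκκ', hκ', hρ, hbd⟩ :=
      hblock N lam L L' a hN hL1 hL' hLup ha haL hΛ
    rw [← hΛdef] at hρ
    refine hbd.trans ?_
    have hρ0 : 0 < ρ := by rw [hρ]; positivity
    have t1 : (ρ * (L : ℝ) ^ (j + 1)) ^ (-κ') ≤ G1 * Λ ^ (-κ) := by
      refine rpow_neg_le_of_div_le hΛ1.le hG1' ?_ hκ hκκ' (by linarith)
      rw [div_le_iff₀ (by linarith)]
      have h1 : δ * (Λ / (J : ℝ) ^ (j + 1)) ≤ ρ * (L : ℝ) ^ (j + 1) := by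
        calc δ * (Λ / (J : ℝ) ^ (j + 1)) = ρ * ((N : ℝ) / J) ^ (j + 1) := by
              rw [hρ, div_pow]; field_simp
          _ ≤ _ := by gcongr
      have h2 : (J : ℝ) ^ (j + 1) / δ ≤ G1 := by
        have : (J : ℝ) ^ (j + 1) ≤ (J : ℝ) ^ (K0 + m) := pow_le_pow_right₀ hJ1 (by omega)
        calc (J : ℝ) ^ (j + 1) / δ ≤ (J : ℝ) ^ (K0 + m) / δ := by gcongr
          _ ≤ G1 := by rw [hG1]; ring_nf; linarith
      calc Λ = δ * (Λ / (J : ℝ) ^ (j + 1)) * ((J : ℝ) ^ (j + 1) / δ) := by field_simp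
        _ ≤ _ := by gcongr
    have t2 : ρ ^ κ' ≤ G2 * (N : ℝ) ^ (-κ) := by
      have e : ρ ^ κ' = (ρ⁻¹) ^ (-κ') := by
        rw [Real.rpow_neg (by positivity), Real.inv_rpow hρ0.le, inv_inv]
      rw [e]
      refine rpow_neg_le_of_div_le hN1 hG2' ?_ hκ hκκ' (by linarith)
      rw [div_le_iff₀ (by linarith), ← div_eq_inv_mul, le_div_iff₀ hρ0]
      have h1 : Λ ≤ m * (N : ℝ) ^ j := by
        have : ∀ i ∈ (univ : Finset (Fin m)), |lam i| * (N : ℝ) ^ c i ≤ (N : ℝ) ^ j := by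
          intro i _
          calc |lam i| * (N : ℝ) ^ c i ≤ N * (N : ℝ) ^ c i := by gcongr; exact hlam i
            _ = (N : ℝ) ^ (1 + c i) := by rw [Real.rpow_add hN0, Real.rpow_one]
            _ ≤ (N : ℝ) ^ ((j : ℕ) : ℝ) := by
                refine Real.rpow_le_rpow_of_exponent_le hN1 ?_
                have : (K0 : ℝ) ≤ j := by exact_mod_cast hj1
                linarith [hci i]
            _ = _ := Real.rpow_natCast _ _
        calc Λ ≤ ∑ i : Fin m, (N : ℝ) ^ j := sum_le_sum this
          _ = _ := by simp
      calc (N : ℝ) * ρ = δ * (Λ / (N : ℝ) ^ j) := by rw [hρ, pow_succ]; field_simp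
        _ ≤ δ * (m * (N : ℝ) ^ j / (N : ℝ) ^ j) := by gcongr
        _ = δ * m := by field_simp
        _ ≤ G2 := by rw [hG2]; linarith
    have t3 : (L : ℝ) ^ (-κ') ≤ J * (N : ℝ) ^ (-κ) :=
      rpow_neg_le_of_div_le hN1 hJ1 hLlow hκ hκκ' (by linarith)
    have hsum : (ρ * (L : ℝ) ^ (j + 1)) ^ (-κ') + ρ ^ κ' + (L : ℝ) ^ (-κ') ≤
        G * ((N : ℝ) ^ (-κ) + Λ ^ (-κ)) := by
      have a1 : 0 ≤ G1 * (N : ℝ) ^ (-κ) := by positivity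
      have a2 : 0 ≤ (G2 + J) * Λ ^ (-κ) := by positivity
      have e : G * ((N : ℝ) ^ (-κ) + Λ ^ (-κ)) = G1 * Λ ^ (-κ) + G2 * (N : ℝ) ^ (-κ) +
          J * (N : ℝ) ^ (-κ) + G1 * (N : ℝ) ^ (-κ) + (G2 + J) * Λ ^ (-κ) := by rw [hG]; ring
      linarith
    rw [hB]
    gcongr
  · have := Nat.lt_mul_div_succ N hJ0
    rw [hLdef]; omega

/-! ### Removing the integer parts -/

/-- The Fejér kernel `F_K(y) = K⁻¹ |∑_{a < K} e(a y)|²`. -/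
def fejer (K : ℕ) (y : ℝ) : ℝ := ‖∑ a ∈ range K, eC (a * y)‖ ^ 2 / K

lemma fejer_nonneg (K : ℕ) (y : ℝ) : 0 ≤ fejer K y := by unfold fejer; positivity

lemma fejer_eq (K : ℕ) (y : ℝ) :
    (fejer K y : ℂ) = (K : ℂ)⁻¹ * ∑ p ∈ range K ×ˢ range K, eC (((p.1 : ℝ) - p.2) * y) := by
  unfold fejer
  push_cast
  rw [← Complex.mul_conj', map_sum, sum_mul_sum, ← sum_product', div_eq_inv_mul]
  congr 1
  refine sum_congr rfl fun p _ => ?_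
  rw [conj_eC, ← eC_add]; congr 1; ring

lemma eC_add_int (y : ℝ) (k : ℤ) : eC (y + k) = eC y := by rw [eC_add, eC_int, mul_one]

lemma fejer_add_int (K : ℕ) (y : ℝ) (k : ℤ) : fejer K (y + k) = fejer K y := by
  unfold fejer
  congr 3
  refine sum_congr rfl fun a _ => ?_
  have : (a : ℝ) * (y + k) = a * y + ((a * k : ℤ) : ℝ) := by push_cast; ring
  rw [this, eC_add_int]

lemma eC_eq_one_iff (x : ℝ) : eC x = 1 ↔ ∃ k : ℤ, x = k := by
  constructor
  · intro h
    unfold eC at h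
    rw [Complex.exp_eq_one_iff] at h
    obtain ⟨k, hk⟩ := h
    refine ⟨k, ?_⟩
    have h2 : (2 * (Real.pi : ℂ) * Complex.I) ≠ 0 := Complex.two_pi_I_ne_zero
    have : (2 * (Real.pi : ℂ) * Complex.I) * x = (2 * (Real.pi : ℂ) * Complex.I) * k := by
      rw [hk]; ring
    have := mul_left_cancel₀ h2 this
    exact_mod_cast this
  · rintro ⟨k, rfl⟩; exact eC_int k

/-- Orthogonality of the characters `r ↦ e(j r / K)` of `ℤ / K`, for frequencies `j = a - b`. -/
lemma sum_eC_sample {K a b : ℕ} (ha : a < K) (hb : b < K) :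
    ∑ r ∈ range K, eC (-(((a : ℝ) - b) * (r / K))) = if a = b then (K : ℂ) else 0 := by
  have hK : (0 : ℝ) < K := by exact_mod_cast (by omega : 0 < K)
  split_ifs with h
  · subst h; simp [eC_zero]
  · set z := eC (-(((a : ℝ) - b) / K)) with hz
    have e : ∀ r ∈ range K, eC (-(((a : ℝ) - b) * (r / K))) = z ^ r := by
      intro r _
      rw [hz, ← eC_nat_mul]; congr 1; ring
    rw [sum_congr rfl e]
    have hz1 : z ≠ 1 := by
      intro h1
      rw [hz, eC_eq_one_iff] at h1
      obtain ⟨k, hk⟩ := h1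
      have h3 : (b : ℝ) - a = k * K := by
        field_simp at hk; linarith
      have h4 : (b : ℤ) - a = k * K := by exact_mod_cast h3
      have h5 : |(b : ℤ) - a| < K := by rw [abs_lt]; omega
      have := Int.eq_zero_of_abs_lt_dvd (m := (K : ℤ)) ⟨k, by rw [h4]; ring⟩ h5
      omega
    rw [geom_sum_eq hz1]
    have : z ^ K = 1 := by
      rw [hz, ← eC_nat_mul, eC_eq_one_iff]
      exact ⟨b - a, by push_cast; field_simp; ring⟩
    rw [this]; simp

lemma sum_fejer_sample {K : ℕ} (hK : 0 < K) (x : ℝ) :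
    ∑ r ∈ range K, fejer K (x - r / K) = K := by
  have hK0 : (K : ℂ) ≠ 0 := by exact_mod_cast hK.ne'
  have : ((∑ r ∈ range K, fejer K (x - r / K) : ℝ) : ℂ) = K := by
    push_cast
    simp_rw [fejer_eq]
    rw [← mul_sum, sum_comm]
    have : ∀ p ∈ range K ×ˢ range K, ∑ r ∈ range K, eC (((p.1 : ℝ) - p.2) * (x - r / K)) =
        if p.1 = p.2 then (K : ℂ) else 0 := by
      intro p hp
      rw [mem_product, mem_range, mem_range] at hp
      have e : ∀ r ∈ range K, eC (((p.1 : ℝ) - p.2) * (x - r / K)) =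
          eC (((p.1 : ℝ) - p.2) * x) * eC (-(((p.1 : ℝ) - p.2) * (r / K))) := by
        intro r _; rw [← eC_add]; congr 1; ring
      rw [sum_congr rfl e, ← mul_sum, sum_eC_sample hp.1 hp.2]
      split_ifs with h
      · rw [h]; simp [eC_zero]
      · simp
    rw [sum_congr rfl this, sum_product]
    simp only [sum_ite_eq, mem_range]
    rw [sum_congr rfl (g := fun _ => (K : ℂ)) (fun a ha => by simp [mem_range.1 ha])]
    simp [hK0]
  exact_mod_cast this

lemma norm_eC_sub_one_ge {y η : ℝ} (h1 : η ≤ |y|) (h2 : |y| ≤ 1 - η) :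
    4 * η ≤ ‖eC y - 1‖ := by
  have key : ∀ y : ℝ, η ≤ y → y ≤ 1 - η → 4 * η ≤ ‖eC y - 1‖ := by
    intro y h1 h2
    by_cases hy : y ≤ 1 / 2
    · by_cases hη : 0 ≤ y
      · have := four_mul_le_norm_eC_sub_one (x := y) (by rw [abs_of_nonneg hη]; exact hy)
        rw [abs_of_nonneg hη] at this; linarith
      · have := norm_nonneg (eC y - 1); linarith
    · by_cases hη : y ≤ 1
      · have := four_mul_le_norm_eC_sub_one (x := y - 1)
          (by rw [abs_of_nonpos (by linarith)]; linarith)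
        rw [abs_of_nonpos (by linarith)] at this
        have e : eC (y - 1) = eC y := by
          have := eC_add_int (y - 1) 1
          rw [← this]; congr 1; push_cast; ring
        rw [e] at this; linarith
      · have := norm_nonneg (eC y - 1); linarith
  rcases abs_cases y with ⟨h, _⟩ | ⟨h, _⟩
  · rw [h] at h1 h2; exact key y h1 h2
  · rw [h] at h1 h2
    have := key (-y) h1 h2
    have e : ‖eC (-y) - 1‖ = ‖eC y - 1‖ := by rw [norm_eC_sub_one, norm_eC_sub_one]; simp
    rwa [e] at this

lemma fejer_le {K : ℕ} (hK : 0 < K) {y η : ℝ} (hη : 0 < η) (h1 : η ≤ |y|) (h2 : |y| ≤ 1 - η) :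
    fejer K y ≤ 1 / (4 * K * η ^ 2) := by
  have hK0 : (0 : ℝ) < K := by exact_mod_cast hK
  have h := norm_eC_sub_one_ge h1 h2
  have hne : eC y ≠ 1 := by
    intro h0; rw [h0] at h; simp at h; linarith
  have hs : ‖∑ a ∈ range K, eC (a * y)‖ ≤ 1 / (2 * η) := by
    simp_rw [eC_nat_mul]
    rw [geom_sum_eq hne, norm_div]
    have : ‖eC y ^ K - 1‖ ≤ 2 := by
      refine (norm_sub_le _ _).trans ?_
      rw [norm_pow, norm_eC]; norm_num
    calc ‖eC y ^ K - 1‖ / ‖eC y - 1‖ ≤ 2 / (4 * η) := by gcongr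
      _ = _ := by field_simp; norm_num
  unfold fejer
  calc ‖∑ a ∈ range K, eC (a * y)‖ ^ 2 / K ≤ (1 / (2 * η)) ^ 2 / K := by gcongr
    _ = _ := by field_simp; norm_num

lemma fejer_ge {Q : ℕ} (hQ : 0 < Q) {y : ℝ} (hy : |y| ≤ 1 / (16 * Q)) :
    (Q : ℝ) / 4 ≤ fejer Q y := by
  have hQ0 : (0 : ℝ) < Q := by exact_mod_cast hQ
  have h : ‖∑ a ∈ range Q, eC (a * y) - Q‖ ≤ Q / 2 := by
    have e : ∑ a ∈ range Q, eC (a * y) - Q = ∑ a ∈ range Q, (eC (a * y) - 1) := by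
      simp [sum_sub_distrib]
    rw [e]
    calc ‖∑ a ∈ range Q, (eC (a * y) - 1)‖ ≤ ∑ a ∈ range Q, (1 / 2 : ℝ) := by
          refine norm_sum_le_of_le _ fun a ha => ?_
          have ha' : (a : ℝ) ≤ Q := by exact_mod_cast (mem_range.1 ha).le
          refine (norm_eC_sub_one_le _).trans ?_
          rw [abs_mul, Nat.abs_cast]
          calc 2 * Real.pi * (a * |y|) ≤ 2 * 4 * (Q * (1 / (16 * Q))) := by
                gcongr; exact Real.pi_le_four
            _ = _ := by field_simp; norm_num
      _ = _ := by simp; ring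
  have h2 : (Q : ℝ) / 2 ≤ ‖∑ a ∈ range Q, eC (a * y)‖ := by
    have := norm_sub_norm_le (Q : ℂ) (∑ a ∈ range Q, eC (a * y))
    rw [norm_sub_rev] at this
    simp only [Complex.norm_natCast] at this
    linarith
  unfold fejer
  calc (Q : ℝ) / 4 = (Q / 2) ^ 2 / Q := by field_simp; norm_num
    _ ≤ _ := by gcongr

/-- The coefficients of the trigonometric polynomial `fejerSample`: the pair `p` contributes the
frequency `p.1 - p.2`. -/
def fejerCoeff (K : ℕ) (ξ : ℝ) (p : ℕ × ℕ) : ℂ :=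
  (K : ℂ)⁻¹ * ((K : ℂ)⁻¹ * ∑ r ∈ range K, eC (ξ * (r / K)) * eC (-(((p.1 : ℝ) - p.2) * (r / K))))

/-- Trigonometric polynomial approximation to `x ↦ e(ξ {x})`, obtained by convolving with the Fejér
kernel over the sample points `r / K` instead of over the whole circle. -/
def fejerSample (K : ℕ) (ξ x : ℝ) : ℂ :=
  (K : ℂ)⁻¹ * ∑ r ∈ range K, eC (ξ * (r / K)) * fejer K (x - r / K)

lemma fejerSample_eq (K : ℕ) (ξ x : ℝ) : fejerSample K ξ x =
    ∑ p ∈ range K ×ˢ range K, fejerCoeff K ξ p * eC (((p.1 : ℝ) - p.2) * x) := by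
  unfold fejerSample fejerCoeff
  simp_rw [fejer_eq, mul_sum, sum_mul]
  rw [sum_comm]
  refine sum_congr rfl fun p _ => ?_
  refine sum_congr rfl fun r _ => ?_
  have : eC (((p.1 : ℝ) - p.2) * (x - r / K)) =
          eC (((p.1 : ℝ) - p.2) * x) * eC (-(((p.1 : ℝ) - p.2) * (r / K))) := by
    rw [← eC_add]; congr 1; ring
  rw [this]; ring

lemma sum_norm_fejerCoeff_le {K : ℕ} (hK : 0 < K) (ξ : ℝ) :
    ∑ p ∈ range K ×ˢ range K, ‖fejerCoeff K ξ p‖ ≤ K := by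
  have hK0 : (0 : ℝ) < K := by exact_mod_cast hK
  have : ∀ p ∈ range K ×ˢ range K, ‖fejerCoeff K ξ p‖ ≤ (K : ℝ)⁻¹ := by
    intro p _
    unfold fejerCoeff
    rw [norm_mul, norm_mul, norm_inv, Complex.norm_natCast]
    have : ‖∑ r ∈ range K, eC (ξ * (r / K)) * eC (-(((p.1 : ℝ) - p.2) * (r / K)))‖ ≤ K := by
      refine (norm_sum_le_of_le (n := fun _ => (1 : ℝ)) _ fun r _ => ?_).trans (by simp)
      rw [norm_mul, norm_eC, norm_eC]; norm_num
    calc (K : ℝ)⁻¹ * ((K : ℝ)⁻¹ * _) ≤ (K : ℝ)⁻¹ * ((K : ℝ)⁻¹ * K) := by gcongr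
      _ = _ := by field_simp
  refine (sum_le_sum this).trans (le_of_eq ?_)
  rw [sum_const, card_product, card_range, nsmul_eq_mul]; push_cast; field_simp

lemma norm_fejerSample_le {K : ℕ} (hK : 0 < K) (ξ x : ℝ) : ‖fejerSample K ξ x‖ ≤ 1 := by
  have hK0 : (0 : ℝ) < K := by exact_mod_cast hK
  unfold fejerSample
  rw [norm_mul, norm_inv, Complex.norm_natCast]
  have : ‖∑ r ∈ range K, eC (ξ * (r / K)) * fejer K (x - r / K)‖ ≤ K := by
    refine (norm_sum_le_of_le (n := fun r : ℕ => fejer K (x - r / K)) _ fun r _ => ?_).trans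
      (sum_fejer_sample hK x).le
    rw [norm_mul, norm_eC, one_mul, Complex.norm_real, Real.norm_eq_abs,
      abs_of_nonneg (fejer_nonneg _ _)]
  calc (K : ℝ)⁻¹ * _ ≤ (K : ℝ)⁻¹ * K := by gcongr
    _ = 1 := by field_simp

/-- Away from the integers the approximation error is `O(1/Q)`; near the integers the error is
dominated by a Fejér kernel of length `Q`. -/
lemma norm_sub_fejerSample_le {Q : ℕ} (hQ : 0 < Q) {ξ : ℝ} (hξ : |ξ| ≤ 1 / 2) (x : ℝ) :
    ‖eC (ξ * Int.fract x) - fejerSample (Q ^ 3) ξ x‖ ≤ 129 / Q + 8 / Q * fejer Q x := by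
  have hQ0 : (0 : ℝ) < Q := by exact_mod_cast hQ
  have hQ1 : (1 : ℝ) ≤ Q := by exact_mod_cast hQ
  set K := Q ^ 3 with hK
  have hKpos : 0 < K := by positivity
  have hKr : (K : ℝ) = (Q : ℝ) ^ 3 := by rw [hK]; push_cast; ring
  have hK0 : (0 : ℝ) < K := by exact_mod_cast hKpos
  set u := Int.fract x with hu
  have hxu : x = u + (⌊x⌋ : ℤ) := (Int.fract_add_floor x).symm
  have hu0 : 0 ≤ u := Int.fract_nonneg x
  have hu1 : u < 1 := Int.fract_lt_one x
  set η : ℝ := 1 / (16 * Q) with hη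
  have hη0 : 0 < η := by positivity
  by_cases hmid : η ≤ u ∧ u ≤ 1 - η
  · have hF : ∀ r : ℕ, fejer K (x - r / K) = fejer K (u - r / K) := by
      intro r
      rw [← fejer_add_int K (u - r / K) ⌊x⌋]; congr 1; linarith
    have e : eC (ξ * u) - fejerSample K ξ x =
        (K : ℂ)⁻¹ * ∑ r ∈ range K, (eC (ξ * u) - eC (ξ * (r / K))) * fejer K (u - r / K) := by
      unfold fejerSample
      simp_rw [sub_mul, hF]
      rw [sum_sub_distrib, ← mul_sum, mul_sub]
      congr 1
      have := sum_fejer_sample hKpos u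
      have h2 : ∑ r ∈ range K, (fejer K (u - r / K) : ℂ) = K := by exact_mod_cast this
      rw [h2]
      have hKc : (K : ℂ) ≠ 0 := by exact_mod_cast hKpos.ne'
      field_simp
    have hterm : ∀ r ∈ range K, ‖(eC (ξ * u) - eC (ξ * (r / K))) * fejer K (u - r / K)‖ ≤
        4 * η * fejer K (u - r / K) + 1 / (2 * K * η ^ 2) := by
      intro r hr
      have hr1 : (r : ℝ) / K < 1 := by
        rw [div_lt_one hK0]; exact_mod_cast mem_range.1 hr
      have hr0 : 0 ≤ (r : ℝ) / K := by positivity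
      have hf := fejer_nonneg K (u - r / K)
      rw [norm_mul, Complex.norm_real, Real.norm_eq_abs, abs_of_nonneg hf]
      by_cases hc : |u - r / K| ≤ η
      · have h1 : ‖eC (ξ * u) - eC (ξ * (r / K))‖ ≤ 4 * η := by
          refine (norm_eC_sub_eC_le _ _).trans ?_
          rw [← mul_sub, abs_mul]
          calc 2 * Real.pi * (|ξ| * |u - r / K|) ≤ 2 * 4 * (1 / 2 * η) := by
                gcongr; exact Real.pi_le_four
            _ = _ := by ring
        have : 0 ≤ 1 / (2 * K * η ^ 2) := by positivity
        nlinarith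
      · push Not at hc
        have h1 : ‖eC (ξ * u) - eC (ξ * (r / K))‖ ≤ 2 := by
          refine (norm_sub_le _ _).trans ?_
          rw [norm_eC, norm_eC]; norm_num
        have h2 : fejer K (u - r / K) ≤ 1 / (4 * K * η ^ 2) := by
          refine fejer_le hKpos hη0 hc.le ?_
          rw [abs_le]; constructor <;> linarith [hmid.1, hmid.2]
        calc _ ≤ 2 * (1 / (4 * K * η ^ 2)) := by gcongr
          _ = 0 + 1 / (2 * K * η ^ 2) := by field_simp; norm_num
          _ ≤ _ := by gcongr; positivity
    have hsum : ‖∑ r ∈ range K, (eC (ξ * u) - eC (ξ * (r / K))) * fejer K (u - r / K)‖ ≤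
        4 * η * K + K * (1 / (2 * K * η ^ 2)) := by
      refine (norm_sum_le_of_le _ hterm).trans (le_of_eq ?_)
      rw [sum_add_distrib, ← mul_sum, sum_fejer_sample hKpos, sum_const, card_range, nsmul_eq_mul]
    rw [e, norm_mul, norm_inv, Complex.norm_natCast]
    calc (K : ℝ)⁻¹ * _ ≤ (K : ℝ)⁻¹ * (4 * η * K + K * (1 / (2 * K * η ^ 2))) := by gcongr
      _ = 4 * η + 1 / (2 * K * η ^ 2) := by field_simp
      _ = (1 / 4 + 128) / Q := by rw [hη, hKr]; field_simp; norm_num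
      _ ≤ 129 / Q := by gcongr; norm_num
      _ ≤ _ := by have := fejer_nonneg Q x
                  have : 0 ≤ 8 / Q * fejer Q x := by positivity
                  linarith
  · have h2 : (Q : ℝ) / 4 ≤ fejer Q x := by
      by_cases h : η ≤ u
      · have h3 : 1 - η < u := by by_contra h4; exact hmid ⟨h, by linarith⟩
        have : x = (u - 1) + ((⌊x⌋ + 1 : ℤ) : ℝ) := by push_cast; linarith
        rw [this, fejer_add_int]
        exact fejer_ge hQ (by rw [abs_of_nonpos (by linarith)]; linarith)
      · rw [hxu, fejer_add_int]
        exact fejer_ge hQ (by rw [abs_of_nonneg hu0]; linarith)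
    have h1 : ‖eC (ξ * u) - fejerSample K ξ x‖ ≤ 2 := by
      refine (norm_sub_le _ _).trans ?_
      rw [norm_eC]; linarith [norm_fejerSample_le hKpos ξ x]
    calc _ ≤ (2 : ℝ) := h1
      _ = 0 + 8 / Q * (Q / 4) := by field_simp; norm_num
      _ ≤ _ := by gcongr; positivity

lemma norm_prod_sub_prod_le {ι : Type*} (s : Finset ι) (f g : ι → ℂ)
    (hf : ∀ i ∈ s, ‖f i‖ ≤ 1) (hg : ∀ i ∈ s, ‖g i‖ ≤ 1) :
    ‖∏ i ∈ s, f i - ∏ i ∈ s, g i‖ ≤ ∑ i ∈ s, ‖f i - g i‖ := by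
  classical
  induction s using Finset.induction_on with
  | empty => simp
  | insert a s ha ih =>
    rw [prod_insert ha, prod_insert ha, sum_insert ha]
    have e : f a * ∏ i ∈ s, f i - g a * ∏ i ∈ s, g i =
        (f a - g a) * ∏ i ∈ s, f i + g a * (∏ i ∈ s, f i - ∏ i ∈ s, g i) := by ring
    rw [e]
    refine (norm_add_le _ _).trans ?_
    rw [norm_mul, norm_mul]
    have h1 : ‖∏ i ∈ s, f i‖ ≤ 1 := by
      rw [norm_prod]
      exact prod_le_one (fun i _ => norm_nonneg _) fun i hi => hf i (mem_insert_of_mem hi)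
    have h2 := hg a (mem_insert_self a s)
    have h3 := ih (fun i hi => hf i (mem_insert_of_mem hi)) fun i hi => hg i (mem_insert_of_mem hi)
    calc _ ≤ ‖f a - g a‖ * 1 + 1 * ‖∏ i ∈ s, f i - ∏ i ∈ s, g i‖ := by gcongr
      _ ≤ _ := by linarith

lemma sum_fejer_le {Q : ℕ} (hQ : 0 < Q) (s : Finset ℕ) (x : ℕ → ℝ) {N B : ℝ}
    (hs : (s.card : ℝ) ≤ N) (hB : 0 ≤ B) 
    (h : ∀ j : ℤ, j ≠ 0 → |j| < Q → ‖∑ n ∈ s, eC (j * x n)‖ ≤ N * B) :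
    ∑ n ∈ s, fejer Q (x n) ≤ N * (1 + Q * B) := by
  have hQ0 : (0 : ℝ) < Q := by exact_mod_cast hQ
  have hN : 0 ≤ N := le_trans (by positivity) hs
  have hp : ∀ p ∈ range Q ×ˢ range Q, ‖∑ n ∈ s, eC (((p.1 : ℝ) - p.2) * x n)‖ ≤
      (if p.1 = p.2 then N else 0) + N * B := by
    intro p hp
    rw [mem_product, mem_range, mem_range] at hp
    split_ifs with hpe
    · refine (norm_sum_eC_le _ _).trans (hs.trans ?_)
      have : 0 ≤ N * B := by positivity
      linarith
    · have := h ((p.1 : ℤ) - p.2) (by omega) (by rw [abs_lt]; omega)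
      push_cast at this; linarith
  have e : ((∑ n ∈ s, fejer Q (x n) : ℝ) : ℂ) =
      (Q : ℂ)⁻¹ * ∑ p ∈ range Q ×ˢ range Q, ∑ n ∈ s, eC (((p.1 : ℝ) - p.2) * x n) := by
    push_cast
    simp_rw [fejer_eq]
    rw [← mul_sum, sum_comm]
  have h1 : ∑ n ∈ s, fejer Q (x n) = ‖((∑ n ∈ s, fejer Q (x n) : ℝ) : ℂ)‖ := by
    rw [Complex.norm_real, Real.norm_eq_abs,
      abs_of_nonneg (sum_nonneg fun n _ => fejer_nonneg _ _)]
  rw [h1, e, norm_mul, norm_inv, Complex.norm_natCast]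
  have h2 := norm_sum_le_of_le _ hp
  have h3 : ∑ p ∈ range Q ×ˢ range Q, ((if p.1 = p.2 then N else 0) + N * B) =
      Q * N + Q * Q * (N * B) := by
    rw [sum_add_distrib, sum_const, card_product, card_range, sum_product]
    simp only [sum_ite_eq, mem_range]
    rw [sum_congr rfl (g := fun _ => N) (fun a ha => by simp [mem_range.1 ha])]
    simp
  rw [h3] at h2
  calc _ ≤ (Q : ℝ)⁻¹ * (Q * N + Q * Q * (N * B)) := by gcongr
    _ = _ := by field_simp

/-- Removal of the integer parts: bounds for the exponential sums with phases `∑ (j_i - ξ_i) x_i`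
(`j` integral) and `j x_i` (`j ≠ 0`) yield a bound for the sum with phase `-∑ ξ_i ⌊x_i⌋`. -/
lemma norm_sum_floor_le {m Q : ℕ} (hQ : 0 < Q) (s : Finset ℕ) (x : Fin m → ℕ → ℝ)
    (ξ : Fin m → ℝ) (hξ : ∀ i, |ξ i| ≤ 1 / 2) {N B : ℝ} (hs : (s.card : ℝ) ≤ N) (hB : 0 ≤ B)
    (h1 : ∀ i, ∀ j : ℤ, j ≠ 0 → |j| < Q → ‖∑ n ∈ s, eC (j * x i n)‖ ≤ N * B)
    (h2 : ∀ j : Fin m → ℤ, (∀ i, |j i| < (Q ^ 3 : ℕ)) →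
      ‖∑ n ∈ s, eC (∑ i, (j i - ξ i) * x i n)‖ ≤ N * B) :
    ‖∑ n ∈ s, eC (-∑ i, ξ i * ⌊x i n⌋)‖ ≤
      N * (((Q ^ 3 : ℕ) : ℝ) ^ m * B + m * (137 / Q + 8 * B)) := by
  have hQ0 : (0 : ℝ) < Q := by exact_mod_cast hQ
  have hN : 0 ≤ N := le_trans (by positivity) hs
  set K := Q ^ 3 with hK
  have hKpos : 0 < K := by positivity
  have hK0 : (0 : ℝ) < K := by exact_mod_cast hKpos
  set A : ℕ → ℂ := fun n => ∏ i, eC (-(ξ i * x i n)) * fejerSample K (ξ i) (x i n) with hA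
  have hprod : ∀ n, eC (-∑ i, ξ i * ⌊x i n⌋) =
      ∏ i, eC (-(ξ i * x i n)) * eC (ξ i * Int.fract (x i n)) := by
    intro n
    rw [← sum_neg_distrib, eC_sum]
    refine prod_congr rfl fun i _ => ?_
    rw [← eC_add]; congr 1; rw [← Int.self_sub_floor]; ring
  have hdiff : ∀ n ∈ s, ‖eC (-∑ i, ξ i * ⌊x i n⌋) - A n‖ ≤
      ∑ i, (129 / Q + 8 / Q * fejer Q (x i n)) := by
    intro n _
    rw [hprod, hA]
    refine (norm_prod_sub_prod_le _ _ _ ?_ ?_).trans (sum_le_sum fun i _ => ?_)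
    · intro i _; rw [norm_mul, norm_eC, norm_eC]; norm_num
    · intro i _; rw [norm_mul, norm_eC, one_mul]; exact norm_fejerSample_le hKpos _ _
    · rw [← mul_sub, norm_mul, norm_eC, one_mul]
      exact norm_sub_fejerSample_le hQ (hξ i) _
  have hmain : ‖∑ n ∈ s, A n‖ ≤ N * ((K : ℝ) ^ m * B) := by
    have hAn : ∀ n, A n = ∑ P ∈ Fintype.piFinset fun _ : Fin m => range K ×ˢ range K,
        (∏ i, fejerCoeff K (ξ i) (P i)) *
          eC (∑ i, ((((P i).1 : ℤ) - (P i).2 : ℤ) - ξ i) * x i n) := by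
      intro n
      rw [hA]
      simp_rw [fejerSample_eq, mul_sum]
      rw [prod_univ_sum]
      refine sum_congr rfl fun P _ => ?_
      rw [eC_sum, ← prod_mul_distrib]
      refine prod_congr rfl fun i _ => ?_
      rw [mul_left_comm, ← eC_add]
      congr 2; push_cast; ring
    simp_rw [hAn]
    rw [sum_comm]
    have hb : ∀ P ∈ Fintype.piFinset fun _ : Fin m => range K ×ˢ range K,
        ‖∑ n ∈ s, (∏ i, fejerCoeff K (ξ i) (P i)) *
          eC (∑ i, ((((P i).1 : ℤ) - (P i).2 : ℤ) - ξ i) * x i n)‖ ≤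
        (∏ i, ‖fejerCoeff K (ξ i) (P i)‖) * (N * B) := by
      intro P hP
      rw [← mul_sum, norm_mul, norm_prod]
      have := h2 (fun i => ((P i).1 : ℤ) - (P i).2) (by
        intro i
        have := Fintype.mem_piFinset.1 hP i
        rw [mem_product, mem_range, mem_range] at this
        rw [abs_lt]; omega)
      gcongr
    refine (norm_sum_le_of_le _ hb).trans ?_
    rw [← sum_mul, ← prod_univ_sum (fun _ : Fin m => range K ×ˢ range K)
      fun i p => ‖fejerCoeff K (ξ i) p‖]
    have : ∏ i, ∑ p ∈ range K ×ˢ range K, ‖fejerCoeff K (ξ i) p‖ ≤ ∏ _i : Fin m, (K : ℝ) :=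
      prod_le_prod (fun i _ => sum_nonneg fun _ _ => norm_nonneg _)
        fun i _ => sum_norm_fejerCoeff_le hKpos _
    rw [prod_const, card_univ, Fintype.card_fin] at this
    calc _ ≤ (K : ℝ) ^ m * (N * B) := by gcongr
      _ = _ := by ring
  have herr : ∑ n ∈ s, ∑ i, (129 / Q + 8 / Q * fejer Q (x i n)) ≤
      N * (m * (137 / Q + 8 * B)) := by
    rw [sum_comm]
    have : ∀ i ∈ (univ : Finset (Fin m)), ∑ n ∈ s, (129 / Q + 8 / Q * fejer Q (x i n)) ≤
        N * (137 / Q + 8 * B) := by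
      intro i _
      rw [sum_add_distrib, ← mul_sum, sum_const, nsmul_eq_mul]
      have := sum_fejer_le hQ s (x i) hs hB (h1 i)
      calc _ ≤ N * (129 / Q) + 8 / Q * (N * (1 + Q * B)) := by gcongr
        _ = _ := by field_simp; ring
    refine (sum_le_sum this).trans (le_of_eq ?_)
    rw [sum_const, card_univ, Fintype.card_fin, nsmul_eq_mul]; ring
  have e : ∑ n ∈ s, eC (-∑ i, ξ i * ⌊x i n⌋) =
      ∑ n ∈ s, A n + ∑ n ∈ s, (eC (-∑ i, ξ i * ⌊x i n⌋) - A n) := by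
    rw [← sum_add_distrib]; exact sum_congr rfl fun n _ => by ring
  rw [e]
  calc _ ≤ ‖∑ n ∈ s, A n‖ + ‖∑ n ∈ s, (eC (-∑ i, ξ i * ⌊x i n⌋) - A n)‖ := norm_add_le _ _
    _ ≤ N * ((K : ℝ) ^ m * B) + N * (m * (137 / Q + 8 * B)) :=
        add_le_add hmain ((norm_sum_le_of_le _ hdiff).trans herr)
    _ = _ := by ring

/-! ### The multiplier off the box -/

/-- The multiplier of the averages is small off the box `∏ [-2^l N^{-c_i}, 2^l N^{-c_i}]`. -/
lemma multiplier_bound {m : ℕ} (hm : 0 < m) (c : Fin m → ℝ) (hpos : ∀ i, 0 < c i)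
    (hinj : Function.Injective c) (hint : ∀ i, ∀ k : ℤ, c i ≠ (k : ℝ)) :
    ∃ C κ : ℝ, 0 < C ∧ 0 < κ ∧ ∀ (N l : ℕ) (ξ : Fin m → ℝ), 1 ≤ N → (∀ i, |ξ i| ≤ 1 / 2) →
      (∃ i, 2 ^ l * (N : ℝ) ^ (-(c i)) < |ξ i|) →
      ‖∑ n ∈ Ico (N / 2 + 1) (N + 1), eC (-∑ i, ξ i * ⌊(n : ℝ) ^ c i⌋)‖ ≤
        N * (C * ((N : ℝ) ^ (-κ) + 2 ^ (-(κ * (l : ℝ))))) := by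
  obtain ⟨C0, κ0, hC0, hκ0, hκ0', hbound⟩ := exp_sum_bound hm c hinj hint
  have hne : Nonempty (Fin m) := ⟨⟨0, hm⟩⟩
  obtain ⟨i0, hi0⟩ := Finite.exists_min c
  set c0 : ℝ := min 1 (c i0) with hc0
  have hc0pos : 0 < c0 := lt_min one_pos (hpos i0)
  have hc01 : c0 ≤ 1 := min_le_left _ _
  have hc0i : ∀ i, c0 ≤ c i := fun i => (min_le_right _ _).trans (hi0 i)
  have hm1 : (1 : ℝ) ≤ m := by exact_mod_cast hm
  set κ1 : ℝ := c0 * κ0 with hκ1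
  have hκ1pos : 0 < κ1 := by positivity
  have hκ1le : κ1 ≤ κ0 := by rw [hκ1]; nlinarith
  -- the exponent `s` is chosen so that `K ^ m = Q ^ (3 m) ≤ X ^ (κ1 / 2)` for `Q ≤ X ^ s`
  set s : ℝ := κ1 / (6 * m) with hs
  have hspos : 0 < s := by positivity
  have hsm : s * (6 * m) = κ1 := by rw [hs]; field_simp
  have hs6 : 6 * s ≤ κ1 := by nlinarith
  refine ⟨3 * C0 + m * (274 + 24 * C0), s, by positivity, hspos, ?_⟩
  intro N l ξ hN hξ hex
  have hN1 : (1 : ℝ) ≤ N := by exact_mod_cast hN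
  have hN0 : (0 : ℝ) < N := by linarith
  have hl1 : (1 : ℝ) ≤ 2 ^ l := one_le_pow₀ (by norm_num)
  set X : ℝ := min N (2 ^ l) with hX
  have hX1 : 1 ≤ X := le_min hN1 hl1
  have hX0 : 0 < X := by linarith
  have hXN : X ≤ N := min_le_left _ _
  have hXl : X ≤ 2 ^ l := min_le_right _ _
  have hXc1 : X ^ c0 ≤ X := by
    simpa using Real.rpow_le_rpow_of_exponent_le hX1 hc01
  have hXc : ∀ i, X ^ c0 ≤ (N : ℝ) ^ c i := fun i =>
    (Real.rpow_le_rpow hX0.le hXN hc0pos.le).trans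
      (Real.rpow_le_rpow_of_exponent_le hN1 (hc0i i))
  set B : ℝ := 3 * C0 * X ^ (-κ1) with hB
  have hB0 : 0 ≤ B := by positivity
  set S := Ico (N / 2 + 1) (N + 1) with hS
  have hsum : ∀ lam : Fin m → ℝ, (∀ i, |lam i| ≤ N) →
      X ^ c0 / 2 ≤ ∑ i, |lam i| * (N : ℝ) ^ c i →
      ‖∑ n ∈ S, eC (∑ i, lam i * (n : ℝ) ^ c i)‖ ≤ N * B := by
    intro lam hlam hΛ
    have hp : 0 < X ^ c0 / 2 := by positivity
    refine (hbound N lam hN hlam (hp.trans_le hΛ)).trans ?_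
    have h1 : (N : ℝ) ^ (-κ0) ≤ X ^ (-κ1) :=
      (Real.rpow_le_rpow_of_nonpos hX0 hXN (by linarith)).trans
        (Real.rpow_le_rpow_of_exponent_le hX1 (by linarith))
    have h2 : (∑ i, |lam i| * (N : ℝ) ^ c i) ^ (-κ0) ≤ 2 * X ^ (-κ1) := by
      calc _ ≤ (X ^ c0 / 2) ^ (-κ0) := Real.rpow_le_rpow_of_nonpos hp hΛ (by linarith)
        _ = 2 ^ κ0 * X ^ (-κ1) := by
            rw [Real.div_rpow (by positivity) (by norm_num), ← Real.rpow_mul hX0.le,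
              Real.rpow_neg (by norm_num : (0 : ℝ) ≤ 2), div_inv_eq_mul, hκ1]
            rw [mul_comm, mul_neg]
        _ ≤ 2 ^ (1 : ℝ) * X ^ (-κ1) := by gcongr <;> linarith
        _ = _ := by rw [Real.rpow_one]
    calc C0 * N * ((N : ℝ) ^ (-κ0) + (∑ i, |lam i| * (N : ℝ) ^ c i) ^ (-κ0))
        ≤ C0 * N * (X ^ (-κ1) + 2 * X ^ (-κ1)) := by gcongr
      _ = N * B := by rw [hB]; ring
  have hXs1 : 1 ≤ X ^ s := Real.one_le_rpow hX1 hspos.le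
  set Q := ⌊X ^ s⌋₊ with hQ
  have hQ1 : 1 ≤ Q := Nat.le_floor (by simpa using hXs1)
  have hQr1 : (1 : ℝ) ≤ Q := by exact_mod_cast hQ1
  have hQle : (Q : ℝ) ≤ X ^ s := Nat.floor_le (by positivity)
  have hQge : X ^ s / 2 ≤ Q := by
    have := Nat.lt_floor_add_one (X ^ s)
    rw [← hQ] at this; linarith
  have hKle : ((Q ^ 3 : ℕ) : ℝ) ≤ X ^ (3 * s) := by
    push_cast
    calc (Q : ℝ) ^ 3 ≤ (X ^ s) ^ 3 := by gcongr
      _ = _ := by rw [← Real.rpow_natCast, ← Real.rpow_mul hX0.le]; congr 1; push_cast; ring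
  have hKN : ((Q ^ 3 : ℕ) : ℝ) ≤ N := by
    refine hKle.trans (le_trans ?_ hXN)
    simpa using Real.rpow_le_rpow_of_exponent_le hX1 (by linarith : 3 * s ≤ 1)
  have hQK : (Q : ℝ) ≤ ((Q ^ 3 : ℕ) : ℝ) := by
    exact_mod_cast Nat.le_self_pow (by norm_num) Q
  have hcard : (S.card : ℝ) ≤ N := by
    rw [hS, Nat.card_Ico]; exact_mod_cast (by omega)
  have hfl := norm_sum_floor_le hQ1 S (fun i n => (n : ℝ) ^ c i) ξ hξ hcard hB0 ?_ ?_
  · refine hfl.trans ?_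
    gcongr
    have hXs : X ^ (-s) ≤ (N : ℝ) ^ (-s) + 2 ^ (-(s * (l : ℝ))) := by
      rcases min_choice (N : ℝ) (2 ^ l) with h | h
      · rw [hX, h]; have : 0 ≤ (2 : ℝ) ^ (-(s * (l : ℝ))) := by positivity
        linarith
      · rw [hX, h, ← Real.rpow_natCast, ← Real.rpow_mul (by norm_num)]
        have : 0 ≤ (N : ℝ) ^ (-s) := by positivity
        have e : (l : ℝ) * -s = -(s * l) := by ring
        rw [e]; linarith
    have hXκ : X ^ (-κ1) ≤ X ^ (-s) := Real.rpow_le_rpow_of_exponent_le hX1 (by linarith)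
    have t1 : ((Q ^ 3 : ℕ) : ℝ) ^ m * B ≤ 3 * C0 * X ^ (-s) := by
      calc ((Q ^ 3 : ℕ) : ℝ) ^ m * B ≤ (X ^ (3 * s)) ^ m * B := by gcongr
        _ = 3 * C0 * X ^ (3 * s * m - κ1) := by
            rw [hB, ← Real.rpow_natCast, ← Real.rpow_mul hX0.le, sub_eq_add_neg,
              Real.rpow_add hX0]; ring
        _ ≤ 3 * C0 * X ^ (-s) := by
            gcongr
            nlinarith
    have t2 : 137 / (Q : ℝ) ≤ 274 * X ^ (-s) := by
      calc 137 / (Q : ℝ) ≤ 137 / (X ^ s / 2) := by gcongr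
        _ = _ := by rw [Real.rpow_neg hX0.le]; field_simp; norm_num
    have t3 : 8 * B ≤ 24 * C0 * X ^ (-s) := by
      calc 8 * B = 24 * C0 * X ^ (-κ1) := by rw [hB]; ring
        _ ≤ _ := by gcongr
    calc _ ≤ 3 * C0 * X ^ (-s) + m * (274 * X ^ (-s) + 24 * C0 * X ^ (-s)) := by gcongr
      _ = (3 * C0 + m * (274 + 24 * C0)) * X ^ (-s) := by ring
      _ ≤ _ := by gcongr
  · intro i j hj0 hjQ
    have hj1 : (1 : ℝ) ≤ |(j : ℝ)| := by exact_mod_cast Int.one_le_abs hj0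
    have hjQ' : |(j : ℝ)| ≤ Q := by exact_mod_cast hjQ.le
    have := hsum (Pi.single i (j : ℝ)) ?_ ?_
    · convert this using 5 with n
      rw [sum_eq_single i] <;> simp +contextual
    · intro k
      by_cases hk : k = i
      · subst hk; simp only [Pi.single_eq_same]; linarith
      · simp [hk]
    · have h1 := single_le_sum (f := fun k => |(Pi.single i (j : ℝ) : Fin m → ℝ) k| * (N : ℝ) ^ c k)
        (fun k _ => by positivity) (mem_univ i)
      simp only [Pi.single_eq_same] at h1
      have h2 := hXc i
      have h3 : 0 < (N : ℝ) ^ c i := by positivity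
      nlinarith
  · intro j hj
    have hjr : ∀ i, |(j i : ℝ)| + 1 ≤ ((Q ^ 3 : ℕ) : ℝ) := fun i => by
      have := hj i
      have : |j i| + 1 ≤ ((Q ^ 3 : ℕ) : ℤ) := by omega
      exact_mod_cast this
    have := hsum (fun i => j i - ξ i) ?_ ?_
    · exact this
    · intro i
      have h1 := abs_sub (j i : ℝ) (ξ i)
      linarith [hjr i, hξ i]
    · by_cases hj0 : ∀ i, j i = 0
      · obtain ⟨i, hi⟩ := hex
        refine le_trans ?_ (single_le_sum (fun k _ => by positivity) (mem_univ i))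
        rw [hj0 i]
        simp only [Int.cast_zero, zero_sub, abs_neg]
        have h3 : 0 < (N : ℝ) ^ c i := by positivity
        rw [Real.rpow_neg hN0.le] at hi
        have h4 : (2 : ℝ) ^ l ≤ |ξ i| * (N : ℝ) ^ c i := by
          rw [← div_eq_mul_inv, div_lt_iff₀ h3] at hi; exact hi.le
        linarith
      · push Not at hj0
        obtain ⟨i, hi⟩ := hj0
        refine le_trans ?_ (single_le_sum (fun k _ => by positivity) (mem_univ i))
        have h3 : 0 < (N : ℝ) ^ c i := by positivity
        have hj1 : (1 : ℝ) ≤ |(j i : ℝ)| := by exact_mod_cast Int.one_le_abs hi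
        have h4 := abs_sub_abs_le_abs_sub (j i : ℝ) (ξ i)
        have h5 : 1 / 2 ≤ |(j i : ℝ) - ξ i| := by linarith [hξ i]
        calc X ^ c0 / 2 = 1 / 2 * X ^ c0 := by ring
          _ ≤ |(j i : ℝ) - ξ i| * (N : ℝ) ^ c i := by gcongr; exact hXc i

/-! ### Plancherel -/

lemma orthonormal_hasSum_sq {ι E : Type*} [NormedAddCommGroup E] [InnerProductSpace ℂ E]
    {v : ι → E} (hv : Orthonormal ℂ v) {a : ι → ℂ} {w : E} (h : HasSum (fun i => a i • v i) w) :
    HasSum (fun i => ‖a i‖ ^ 2) (‖w‖ ^ 2) := by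
  classical
  have hin : ∀ i, inner ℂ (v i) w = a i := by
    intro i
    have h1 : HasSum (fun j => inner ℂ (v i) (a j • v j)) (inner ℂ (v i) w) :=
      (innerSL ℂ (v i)).hasSum h
    have h2 : HasSum (fun j => inner ℂ (v i) (a j • v j)) (inner ℂ (v i) (a i • v i)) := by
      refine hasSum_single i fun j hj => ?_
      rw [inner_smul_right, orthonormal_iff_ite.1 hv, if_neg hj.symm, mul_zero]
    rw [h1.unique h2, inner_smul_right, orthonormal_iff_ite.1 hv, if_pos rfl, mul_one]
  have h1 : HasSum (fun j => inner ℂ w (a j • v j)) (inner ℂ w w) := (innerSL ℂ w).hasSum h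
  have h3 : ∀ j, inner ℂ w (a j • v j) = ((‖a j‖ ^ 2 : ℝ) : ℂ) := by
    intro j
    rw [inner_smul_right, ← inner_conj_symm, hin, Complex.mul_conj']
    push_cast; rfl
  have h4 : inner ℂ w w = ((‖w‖ ^ 2 : ℝ) : ℂ) := by
    rw [inner_self_eq_norm_sq_to_K]; push_cast; rfl
  have h2 : HasSum (fun j => ((‖a j‖ ^ 2 : ℝ) : ℂ)) ((‖w‖ ^ 2 : ℝ) : ℂ) := by
    rw [← h4]; simpa only [h3] using h1
  exact_mod_cast h2

/-- The Haar probability measure on `ℝ / ℤ`, the normalisation used in the multivariate Fourier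
series library. -/
local instance : MeasureSpace UnitAddCircle := ⟨AddCircle.haarAddCircle⟩

local instance : Measure.IsAddHaarMeasure (volume : Measure UnitAddCircle) :=
  inferInstanceAs (Measure.IsAddHaarMeasure AddCircle.haarAddCircle)

local instance : IsProbabilityMeasure (volume : Measure UnitAddCircle) :=
  inferInstanceAs (IsProbabilityMeasure AddCircle.haarAddCircle)

open UnitAddTorus in
/-- Plancherel for absolutely summable sequences: a pointwise bound between Fourier transforms
passes to the `ℓ²` norms. -/
lemma plancherel_compare {m : ℕ} {g f : (Fin m → ℤ) → ℂ} (hg : Summable g) (hf : Summable f)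
    {M : ℝ} (h : ∀ t : UnitAddTorus (Fin m),
      ‖∑' x, g x * mFourier (-x) t‖ ≤ M * ‖∑' x, f x * mFourier (-x) t‖) :
    Summable (fun x => ‖g x‖ ^ 2) ∧ Summable (fun x => ‖f x‖ ^ 2) ∧
      √(∑' x, ‖g x‖ ^ 2) ≤ M * √(∑' x, ‖f x‖ ^ 2) := by
  have horth : Orthonormal ℂ (fun x : Fin m → ℤ => mFourierLp (d := Fin m) 2 (-x)) :=
    orthonormal_mFourier.comp _ neg_injective
  have hcont : ∀ k : (Fin m → ℤ) → ℂ, Summable k →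
      HasSum (fun x => k x • mFourier (-x)) (∑' x, k x • mFourier (d := Fin m) (-x)) := by
    intro k hk
    refine Summable.hasSum (Summable.of_norm ?_)
    simpa only [norm_smul, mFourier_norm, mul_one] using hk.norm
  have happ : ∀ k : (Fin m → ℤ) → ℂ, Summable k → ∀ t,
      (∑' x, k x • mFourier (d := Fin m) (-x)) t = ∑' x, k x * mFourier (-x) t := by
    intro k hk t
    exact ((ContinuousMap.evalCLM ℂ t).hasSum (hcont k hk)).tsum_eq.symm
  have hsq : ∀ k : (Fin m → ℤ) → ℂ, Summable k → HasSum (fun x => ‖k x‖ ^ 2)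
      (‖ContinuousMap.toLp (E := ℂ) 2 volume ℂ (∑' x, k x • mFourier (d := Fin m) (-x))‖ ^ 2) := by
    intro k hk
    refine orthonormal_hasSum_sq horth ?_
    have := (ContinuousMap.toLp (E := ℂ) 2 (volume : Measure (UnitAddTorus (Fin m))) ℂ).hasSum
      (hcont k hk)
    simpa only [map_smul] using this
  refine ⟨(hsq g hg).summable, (hsq f hf).summable, ?_⟩
  rw [(hsq g hg).tsum_eq, (hsq f hf).tsum_eq, Real.sqrt_sq (norm_nonneg _),
    Real.sqrt_sq (norm_nonneg _)]
  refine Lp.norm_le_mul_norm_of_ae_le_mul ?_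
  filter_upwards [ContinuousMap.coeFn_toLp (E := ℂ) (p := 2) (𝕜 := ℂ) volume
      (∑' x, g x • mFourier (d := Fin m) (-x)),
    ContinuousMap.coeFn_toLp (E := ℂ) (p := 2) (𝕜 := ℂ) volume
      (∑' x, f x • mFourier (d := Fin m) (-x))] with t h1 h2
  rw [h1, h2, happ g hg, happ f hf]
  exact h t

lemma lpZ_two_eq {m : ℕ} {f : (Fin m → ℤ) → ℂ} (hf : Summable fun x => ‖f x‖ ^ 2) :
    lpZ m 2 f = ENNReal.ofReal (√(∑' x, ‖f x‖ ^ 2)) := by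
  unfold lpZ
  rw [Real.sqrt_eq_rpow, ← ENNReal.ofReal_rpow_of_nonneg (tsum_nonneg fun _ => by positivity)
    (by norm_num), ENNReal.ofReal_tsum_of_nonneg (fun _ => by positivity) hf]
  congr 1
  · congr 1
    funext x
    rw [ENNReal.ofReal_pow (norm_nonneg _), ofReal_norm]
    simp [enorm]
  · norm_num

/-- Each point of the circle has a representative in `[-1/2, 1/2]`. -/
lemma exists_rep (t : UnitAddCircle) : ∃ ξ : ℝ, |ξ| ≤ 1 / 2 ∧ (ξ : UnitAddCircle) = t := by
  obtain ⟨x, rfl⟩ := QuotientAddGroup.mk_surjective t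
  refine ⟨x - round x, abs_sub_round x, ?_⟩
  have : ((round x : ℝ) : UnitAddCircle) = 0 := by
    rw [AddCircle.coe_eq_zero_iff]; exact ⟨round x, by simp⟩
  rw [AddCircle.coe_sub, this, sub_zero]

lemma mFourier_neg_coe {m : ℕ} (x : Fin m → ℤ) (ξ : Fin m → ℝ) :
    UnitAddTorus.mFourier (-x) (fun i => (ξ i : UnitAddCircle)) =
      eC (-∑ i, (x i : ℝ) * ξ i) := by
  rw [← sum_neg_distrib, eC_sum]
  simp only [UnitAddTorus.mFourier, ContinuousMap.coe_mk]
  refine prod_congr rfl fun i _ => ?_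
  rw [fourier_coe_apply]
  unfold eC
  congr 1; simp; ring

open UnitAddTorus in
/-- The average `Ã_N` acts on Fourier transforms as multiplication by
`N⁻¹ ∑_{N/2 < n ≤ N} e(-∑ ⌊n ^ c i⌋ t i)`. -/
lemma tsum_Atil {m : ℕ} (c : Fin m → ℝ) (N : ℕ) {f : (Fin m → ℤ) → ℂ} (hf : Summable f) :
    Summable (Atil m c N f) ∧ ∀ t : UnitAddTorus (Fin m),
      ∑' x, Atil m c N f x * mFourier (-x) t =
        ((N : ℂ)⁻¹ * ∑ n ∈ Ico (N / 2 + 1) (N + 1), mFourier (-(fun i => ⌊(n : ℝ) ^ c i⌋)) t) *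
          ∑' x, f x * mFourier (-x) t := by
  have hA : Atil m c N f = fun x => (N : ℂ)⁻¹ * ∑ n ∈ Ico (N / 2 + 1) (N + 1),
      f (x - fun i => ⌊(n : ℝ) ^ c i⌋) := by
    funext x
    unfold Atil
    rw [← sum_filter]
    congr 2
    ext n
    simp only [mem_filter, mem_Icc, mem_Ico]
    omega
  constructor
  · rw [hA]
    refine Summable.mul_left _ (summable_sum fun n _ => ?_)
    exact (Equiv.subRight (fun i => ⌊(n : ℝ) ^ c i⌋)).summable_iff.2 hf
  · intro t
    have hs : Summable fun x => f x * mFourier (-x) t := by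
      refine Summable.of_norm_bounded hf.norm fun x => ?_
      rw [norm_mul]
      have := (mFourier (-x)).norm_coe_le_norm t
      rw [mFourier_norm] at this
      nlinarith [norm_nonneg (f x)]
    have hshift : ∀ v : Fin m → ℤ, HasSum (fun x => f (x - v) * mFourier (-x) t)
        (mFourier (-v) t * ∑' x, f x * mFourier (-x) t) := by
      intro v
      have h1 := (Equiv.subRight v).hasSum_iff.2 (hs.hasSum.mul_left (mFourier (-v) t))
      refine h1.congr_fun fun x => ?_
      simp only [Function.comp_apply, Equiv.subRight_apply]
      have e : -x = -v + -(x - v) := by abel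
      rw [e, mFourier_add]; simp; ring
    have h2 := (hasSum_sum (s := Ico (N / 2 + 1) (N + 1))
      fun n _ => hshift (fun i => ⌊(n : ℝ) ^ c i⌋)).mul_left (N : ℂ)⁻¹
    rw [← sum_mul, ← mul_assoc] at h2
    rw [← h2.tsum_eq, hA]
    simp_rw [← sum_mul, mul_assoc]

/-! ### The minor arc estimate -/

/-- single-scale minor arc estimate, Theorem 4.7 of the
paper: for non-integer `0 < c₁ < ⋯ < c_m` there are `C, κ > 0` such that for
all `N ≥ 1` and `l ∈ ℕ`: if `f ∈ ℓ²(ℤ^m)` and the Fourier transform of `f`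
vanishes on the box `∏_i [−2^l N^{−c_i}, 2^l N^{−c_i}]` (viewed in
`𝕋^m = (ℝ/ℤ)^m`; here vanishing at `ξ` is expressed as
`HasSum (fun x => f x e(−x·ξ)) 0`), then
`‖Ã_N f‖_{ℓ²} ≤ C (N^{−κ} + 2^{−κl}) ‖f‖_{ℓ²}`. -/
theorem stmt13 {m : ℕ} (hm : 0 < m) (c : Fin m → ℝ)
    (hpos : ∀ i, 0 < c i) (hmono : StrictMono c)
    (hint : ∀ i, ∀ k : ℤ, c i ≠ (k : ℝ)) :
    ∃ C : ℝ, 0 < C ∧ ∃ κ : ℝ, 0 < κ ∧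
      ∀ N : ℕ, 1 ≤ N → ∀ l : ℕ, ∀ f : (Fin m → ℤ) → ℂ, lpZ m 2 f ≠ ⊤ →
        (∀ ξ : Fin m → ℝ, (∀ i, |ξ i| ≤ 2 ^ l * (N : ℝ) ^ (-(c i))) →
          HasSum (fun x : Fin m → ℤ =>
            f x * eC (-(∑ i, (x i : ℝ) * ξ i))) 0) →
        lpZ m 2 (Atil m c N f) ≤
          ENNReal.ofReal (C * ((N : ℝ) ^ (-κ) + 2 ^ (-(κ * (l : ℝ))))) *
            lpZ m 2 f := by
  obtain ⟨C, κ, hC, hκ, hbound⟩ := multiplier_bound hm c hpos hmono.injective hint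
  refine ⟨C, hC, κ, hκ, fun N hN l f _ hvan => ?_⟩
  have hN0 : (0 : ℝ) < N := by exact_mod_cast hN
  -- unconditional convergence at `ξ = 0` already forces absolute summability of `f`
  have hf : Summable f := by
    have := (hvan 0 fun i => by simp; positivity).summable
    simpa [eC_zero] using this
  set M : ℝ := C * ((N : ℝ) ^ (-κ) + 2 ^ (-(κ * (l : ℝ)))) with hM
  have hM0 : 0 ≤ M := by positivity
  obtain ⟨hA, hAt⟩ := tsum_Atil c N hf
  obtain ⟨h1, h2, h3⟩ := plancherel_compare (M := M) hA hf fun t => by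
    choose ξ hξ hξt using fun i => exists_rep (t i)
    obtain rfl : (fun i => (ξ i : UnitAddCircle)) = t := funext hξt
    rw [hAt]
    simp only [mFourier_neg_coe]
    by_cases hbox : ∀ i, |ξ i| ≤ 2 ^ l * (N : ℝ) ^ (-(c i))
    · rw [(hvan ξ hbox).tsum_eq]; simp
    · push Not at hbox
      have hb := hbound N l ξ hN hξ hbox
      rw [norm_mul]
      gcongr
      rw [norm_mul, norm_inv, Complex.norm_natCast, inv_mul_le_iff₀ hN0]
      simpa only [mul_comm] using hb
  rw [lpZ_two_eq h1, lpZ_two_eq h2, ← ENNReal.ofReal_mul hM0]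
  exact ENNReal.ofReal_le_ofReal h3

end
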